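/- arXiv:2509.11001 — 5 statements merged into one kernel-verified Lean document; each statement's English description precedes it below -/
import Mathlib

section
/- Let n be a natural number with prime factorisation n = p_1^{α_1} ⋯ p_t^{α_t} (the p_i distinct primes). Then every skew brace of order n is almost trivial (i.e., a ∘ b = b + a for all a, b) if and only if α_i = 1 for every i and p_i does not divide p_j − 1 for all i ≠ j. -/
/-- A skew (left) brace: a set with two group structures `(A,+)` and `(A,∘)`
(the latter written multiplicatively) satisfying
`a ∘ (b + c) = a ∘ b - a + a ∘ c`. -/
class SkewBrace (A : Type*) extends AddGroup A, Group A where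
  skew_left_distrib : ∀ a b c : A, a * (b + c) = a * b - a + a * c

theorem hom_trivial_of_coprime {G H : Type*} [Group G] [Group H] [Finite G] [Finite H]
    (h : (Nat.card G).Coprime (Nat.card H)) (f : G →* H) (g : G) : f g = 1 := by
  have h1 : orderOf (f g) ∣ Nat.card G := (orderOf_map_dvd f g).trans (orderOf_dvd_natCard g)
  have h2 : orderOf (f g) ∣ Nat.card H := orderOf_dvd_natCard _
  exact orderOf_eq_one_iff.mp (Nat.eq_one_of_dvd_coprimes h h1 h2)

theorem isCyclic_of_sqf_coprime {G : Type*} [Group G] [Finite G] (hs : Squarefree (Nat.card G))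
    (hc : (Nat.card G).Coprime (Nat.totient (Nat.card G))) : IsCyclic G := by
  have : IsZGroup G := IsZGroup.of_squarefree hs
  have := IsZGroup.isCyclic_commutator G
  have hcen : commutator G ≤ Subgroup.center G := by
    intro x hx
    rw [Subgroup.mem_center_iff]
    intro g
    have hcop : (Nat.card G).Coprime (Nat.card (MulAut (commutator G))) := by
      rw [IsCyclic.card_mulAut]
      exact hc.coprime_dvd_right (Nat.totient_dvd_of_dvd (Subgroup.card_subgroup_dvd_card _))
    have h1 := hom_trivial_of_coprime hcop (MulAut.conjNormal (H := commutator G)) g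
    have h2 := MulAut.conjNormal_apply (H := commutator G) g ⟨x, hx⟩
    rw [h1] at h2
    simp only [MulAut.one_apply] at h2
    exact (eq_mul_inv_iff_mul_eq.mp h2).symm
  have : Group.IsNilpotent G := by
    refine Subgroup.isNilpotent_of_ker_le_center (Abelianization.of (G := G)) ?_
    rw [Abelianization.ker_of]
    exact hcen
  infer_instance

theorem coprime_totient_of {n : ℕ} (hs : Squarefree n)
    (h : ∀ p ∈ n.primeFactors, ∀ q ∈ n.primeFactors, p ≠ q → ¬ p ∣ q - 1) :
    n.Coprime n.totient := by
  have hn0 : n ≠ 0 := hs.ne_zero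
  have ht : n.totient = ∏ p ∈ n.primeFactors, (p - 1) := by
    have h1 := Nat.totient_mul_prod_primeFactors n
    rw [Nat.prod_primeFactors_of_squarefree hs, mul_comm] at h1
    exact Nat.eq_of_mul_eq_mul_left (Nat.pos_of_ne_zero hn0) h1
  refine Nat.Coprime.symm (Nat.coprime_of_dvd ?_)
  intro r hr h1 h2
  rw [ht, hr.prime.dvd_finsetProd_iff] at h1
  obtain ⟨q, hq, hd⟩ := h1
  refine h r (Nat.mem_primeFactors.mpr ⟨hr, h2, hn0⟩) q hq ?_ hd
  rintro rfl
  have := Nat.le_of_dvd (by have := hr.two_le; omega) hd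
  have := hr.two_le
  omega

namespace SkewBrace

variable {A : Type*} [SkewBrace A]

theorem mul_zero_eq (a : A) : a * 0 = a := by
  have h := skew_left_distrib a 0 0
  rw [add_zero, sub_eq_add_neg, add_assoc] at h
  have h2 : -a + a * 0 = 0 := by
    apply add_left_cancel (a := a * 0)
    rw [← h, add_zero]
  exact (neg_add_eq_zero.mp h2).symm

theorem mul_neg_eq (a b : A) : a * (-b) = a - a * b + a := by
  have h := skew_left_distrib a b (-b)
  rw [add_neg_cancel, mul_zero_eq] at h
  have h2 : a * (-b) = -(a * b - a) + a := by
    rw [eq_neg_add_iff_add_eq]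
    exact h.symm
  rw [h2, neg_sub]

/-- The lambda map at an element, on the multiplicative copy of the additive group. -/
def lamHom : A →* MulAut (Multiplicative A) where
  toFun a :=
    { toFun := fun b => Multiplicative.ofAdd (-a + a * b.toAdd)
      invFun := fun b => Multiplicative.ofAdd (a⁻¹ * (a + b.toAdd))
      left_inv := fun b => by simp
      right_inv := fun b => by simp
      map_mul' := fun b c => by
        apply Multiplicative.toAdd.injective
        simp [skew_left_distrib, sub_eq_add_neg, add_assoc] }
  map_one' := by
    ext b
    have h10 : (1 : A) = 0 := by
      have := mul_zero_eq (1 : A)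
      rw [one_mul] at this
      exact this.symm
    apply Multiplicative.toAdd.injective
    simp [h10]
    rw [← h10, one_mul]
  map_mul' a b := by
    ext c
    apply Multiplicative.toAdd.injective
    simp [skew_left_distrib, mul_neg_eq, sub_eq_add_neg, add_assoc, mul_assoc]

end SkewBrace

theorem backward_dir {A : Type*} [Fintype A] [SkewBrace A] {n : ℕ} (hA : Fintype.card A = n)
    (hs : Squarefree n) (hc : n.Coprime n.totient) (a b : A) : a * b = b + a := by
  have hcard : Nat.card (Multiplicative A) = n := by
    rw [Nat.card_congr Multiplicative.toAdd, Nat.card_eq_fintype_card, hA]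
  have hcard2 : Nat.card A = n := by rw [Nat.card_eq_fintype_card, hA]
  have : Finite (Multiplicative A) := Finite.of_equiv A Multiplicative.ofAdd
  have : IsCyclic (Multiplicative A) :=
    isCyclic_of_sqf_coprime (by rw [hcard]; exact hs) (by rw [hcard]; exact hc)
  have h1 := hom_trivial_of_coprime (by rw [IsCyclic.card_mulAut, hcard, hcard2]; exact hc)
    (SkewBrace.lamHom (A := A)) a
  have h2 : -a + a * b = b :=
    congrArg Multiplicative.toAdd (DFunLike.congr_fun h1 (Multiplicative.ofAdd b))
  have h3 : a * b = a + b := by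
    rw [← neg_add_eq_iff_eq_add]; exact h2
  rw [h3]
  exact congrArg Multiplicative.toAdd
    (IsMulCommutative.is_comm.comm (Multiplicative.ofAdd a) (Multiplicative.ofAdd b))

/-- The additive copy of a group structure. -/
@[reducible] def addCopy (G : Type*) [Group G] : AddGroup G :=
  letI : Add G := ⟨fun a b => a * b⟩
  letI : Zero G := ⟨1⟩
  letI : Neg G := ⟨fun a => a⁻¹⟩
  AddGroup.ofLeftAxioms (fun a b c => mul_assoc a b c) (fun a => one_mul a)
    (fun a => inv_mul_cancel a)

/-- The trivial skew brace on a group. -/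
@[reducible] def trivialSkewBrace (G : Type*) [Group G] : SkewBrace G :=
  { (inferInstance : Group G), addCopy G with
    skew_left_distrib := fun a b c => by
      change a * (b * c) = (a * b) * a⁻¹ * (a * c)
      group }

theorem comm_of_forall {n : ℕ} (H : ∀ (A : Type) [Fintype A] [SkewBrace A], Fintype.card A = n →
      (∀ a b : A, a * b = b + a)) (G : Type) [Group G] [Finite G] (hG : Nat.card G = n) (a b : G) :
    a * b = b * a := by
  have := Fintype.ofFinite G
  let _ := trivialSkewBrace G
  exact H G (by rw [← Nat.card_eq_fintype_card, hG]) a b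

/-- A type synonym carrying the nontrivial brace of order `p * p * m`. -/
def SqBrace (p m : ℕ) : Type := ZMod p × ZMod p × ZMod m

instance (p m : ℕ) : AddCommGroup (SqBrace p m) :=
  inferInstanceAs (AddCommGroup (ZMod p × ZMod p × ZMod m))

instance (p m : ℕ) : SkewBrace (SqBrace p m) :=
  { (inferInstance : AddCommGroup (SqBrace p m)) with
    mul := fun x y => (x.1 + y.1, x.2.1 + y.2.1 + x.1 * y.1, x.2.2 + y.2.2)
    one := (0, 0, 0)
    inv := fun x => (-x.1, -x.2.1 + x.1 * x.1, -x.2.2)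
    mul_assoc := fun x y z => by
      refine Prod.ext ?_ (Prod.ext ?_ ?_)
      · change x.1 + y.1 + z.1 = x.1 + (y.1 + z.1); ring
      · change x.2.1 + y.2.1 + x.1 * y.1 + z.2.1 + (x.1 + y.1) * z.1
          = x.2.1 + (y.2.1 + z.2.1 + y.1 * z.1) + x.1 * (y.1 + z.1); ring
      · change x.2.2 + y.2.2 + z.2.2 = x.2.2 + (y.2.2 + z.2.2); ring
    one_mul := fun x => by
      refine Prod.ext ?_ (Prod.ext ?_ ?_)
      · change 0 + x.1 = x.1; ring
      · change 0 + x.2.1 + 0 * x.1 = x.2.1; ring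
      · change 0 + x.2.2 = x.2.2; ring
    mul_one := fun x => by
      refine Prod.ext ?_ (Prod.ext ?_ ?_)
      · change x.1 + 0 = x.1; ring
      · change x.2.1 + 0 + x.1 * 0 = x.2.1; ring
      · change x.2.2 + 0 = x.2.2; ring
    inv_mul_cancel := fun x => by
      refine Prod.ext ?_ (Prod.ext ?_ ?_)
      · change -x.1 + x.1 = 0; ring
      · change -x.2.1 + x.1 * x.1 + x.2.1 + -x.1 * x.1 = 0; ring
      · change -x.2.2 + x.2.2 = 0; ring
    skew_left_distrib := fun x y z => by
      refine Prod.ext ?_ (Prod.ext ?_ ?_)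
      · change x.1 + (y.1 + z.1) = x.1 + y.1 - x.1 + (x.1 + z.1); ring
      · change x.2.1 + (y.2.1 + z.2.1) + x.1 * (y.1 + z.1)
          = x.2.1 + y.2.1 + x.1 * y.1 - x.2.1 + (x.2.1 + z.2.1 + x.1 * z.1); ring
      · change x.2.2 + (y.2.2 + z.2.2) = x.2.2 + y.2.2 - x.2.2 + (x.2.2 + z.2.2); ring }

theorem sq_case {n p m : ℕ} (hn : 0 < n) (hp : p.Prime) (hm : n = p * (p * m))
    (H : ∀ (A : Type) [Fintype A] [SkewBrace A], Fintype.card A = n →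
      (∀ a b : A, a * b = b + a)) : False := by
  have hm0 : m ≠ 0 := by rintro rfl; simp at hm; omega
  have : NeZero m := ⟨hm0⟩
  have : Fact p.Prime := ⟨hp⟩
  let _ : Fintype (SqBrace p m) := inferInstanceAs (Fintype (ZMod p × ZMod p × ZMod m))
  have hc : Fintype.card (SqBrace p m) = n := by
    change Fintype.card (ZMod p × ZMod p × ZMod m) = n
    simp [ZMod.card, hm]
  have h := H (SqBrace p m) hc ((1, 0, 0) : ZMod p × ZMod p × ZMod m)
    ((1, 0, 0) : ZMod p × ZMod p × ZMod m)
  have h2 : (0 + 0 + 1 * 1 : ZMod p) = 0 + 0 := congrArg (fun x : SqBrace p m => x.2.1) h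
  simp at h2

theorem pq_case {n p q m : ℕ} (hn : 0 < n) (hp : p.Prime) (hq : q.Prime) (hm : n = p * q * m)
    (hd : p ∣ q - 1)
    (H : ∀ (A : Type) [Fintype A] [SkewBrace A], Fintype.card A = n →
      (∀ a b : A, a * b = b + a)) : False := by
  have hm0 : m ≠ 0 := by rintro rfl; simp at hm; omega
  have : NeZero m := ⟨hm0⟩
  have : Fact p.Prime := ⟨hp⟩
  have : Fact q.Prime := ⟨hq⟩
  obtain ⟨u, hu⟩ := exists_prime_orderOf_dvd_card' (G := (ZMod q)ˣ) p (by
    rw [Nat.card_eq_fintype_card, ZMod.card_units]; exact hd)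
  let φ : (ZMod q)ˣ →* MulAut (Multiplicative (ZMod q)) :=
    { toFun := fun v => AddEquiv.toMultiplicative (DistribMulAction.toAddEquiv (ZMod q) v)
      map_one' := by ext x; simp
      map_mul' := fun v w => by
        ext x
        apply Multiplicative.toAdd.injective
        simp [mul_smul] }
  let P := Subgroup.zpowers u
  let ψ : P →* MulAut (Multiplicative (ZMod q)) := φ.comp P.subtype
  let G := (Multiplicative (ZMod q) ⋊[ψ] P) × Multiplicative (ZMod m)
  have : Finite (Multiplicative (ZMod q)) := Finite.of_equiv (ZMod q) Multiplicative.ofAdd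
  have : Finite (Multiplicative (ZMod m)) := Finite.of_equiv (ZMod m) Multiplicative.ofAdd
  have : Finite (Multiplicative (ZMod q) ⋊[ψ] P) :=
    Finite.of_equiv _ SemidirectProduct.equivProd.symm
  have hG : Nat.card G = n := by
    rw [Nat.card_prod, SemidirectProduct.card, Nat.card_zpowers, hu,
      Nat.card_congr Multiplicative.toAdd, Nat.card_congr Multiplicative.toAdd, Nat.card_zmod,
      Nat.card_zmod, hm, mul_comm p q]
  have hu1 : u ≠ 1 := by
    rintro rfl
    rw [orderOf_one] at hu
    exact hp.one_lt.ne hu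
  let g : P := ⟨u, Subgroup.mem_zpowers u⟩
  have h := comm_of_forall H G hG (SemidirectProduct.inr g, 1)
    (SemidirectProduct.inl (Multiplicative.ofAdd 1), 1)
  have h1 : (SemidirectProduct.inr g * SemidirectProduct.inl (Multiplicative.ofAdd 1) :
      Multiplicative (ZMod q) ⋊[ψ] P) =
      SemidirectProduct.inl (Multiplicative.ofAdd 1) * SemidirectProduct.inr g :=
    (Prod.ext_iff.mp h).1
  have h2 := congrArg (fun x => x.left.toAdd) h1
  have h3 : (u : ZMod q) = 1 := by
    simpa [ψ, φ, g, Units.smul_def] using h2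
  exact hu1 (Units.ext h3)

/-- Every skew brace of order `n` is almost trivial (`a ∘ b = b + a`) if and
only if `n` is square-free and `p ∤ q - 1` for all distinct primes `p, q`
dividing `n`. -/
theorem every_skewBrace_is_almost_trivial_iff (n : ℕ) (hn : 0 < n) :
    (∀ (A : Type) [Fintype A] [SkewBrace A], Fintype.card A = n →
      (∀ a b : A, a * b = b + a)) ↔
    ((∀ p ∈ n.primeFactors, n.factorization p = 1) ∧
      (∀ p ∈ n.primeFactors, ∀ q ∈ n.primeFactors, p ≠ q → ¬ p ∣ q - 1)) := by
  constructor
  · intro H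
    refine ⟨fun p hp => ?_, fun p hp q hq hpq hd => ?_⟩
    · have hpp := Nat.prime_of_mem_primeFactors hp
      have h1 : 0 < n.factorization p :=
        hpp.factorization_pos_of_dvd hn.ne' (Nat.dvd_of_mem_primeFactors hp)
      by_contra h2
      have h3 : p ^ 2 ∣ n := (hpp.pow_dvd_iff_le_factorization hn.ne').mpr (by omega)
      obtain ⟨m, hm⟩ := h3
      exact sq_case hn hpp (m := m) (by rw [hm]; ring) H
    · have hpp := Nat.prime_of_mem_primeFactors hp
      have hqq := Nat.prime_of_mem_primeFactors hq
      obtain ⟨m, hm⟩ := Nat.Coprime.mul_dvd_of_dvd_of_dvd ((Nat.coprime_primes hpp hqq).mpr hpq)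
        (Nat.dvd_of_mem_primeFactors hp) (Nat.dvd_of_mem_primeFactors hq)
      exact pq_case hn hpp hqq hm hd H
  · rintro ⟨h1, h2⟩ A _ _ hA a b
    have hs : Squarefree n := by
      rw [Nat.squarefree_iff_factorization_le_one hn.ne']
      intro p
      by_cases hp : p ∈ n.primeFactors
      · exact (h1 p hp).le
      · rw [← Nat.support_factorization, Finsupp.notMem_support_iff] at hp
        omega
    exact backward_dir hA hs (coprime_totient_of hs h2) a b
end

section
/- Let n be a natural number with prime factorisation n = p_1^{α_1} ⋯ p_t^{α_t} (the p_i distinct primes). Then every skew brace of order n is a brace (i.e., has abelian additive group) if and only if α_i ≤ 2 for every i and p_i does not divide p_j^{α_j} − 1 for all i ≠ j. -/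
/-- The trivial skew brace. -/
@[reducible] def trivBrace (A : Type) [i : AddGroup A] : SkewBrace A :=
  { i with
    mul := fun a b => a + b
    one := (0 : A)
    inv := fun a => -a
    npow := fun k a => k • a
    npow_zero := fun a => zero_nsmul a
    npow_succ := fun k a => succ_nsmul a k
    mul_assoc := fun a b c => add_assoc a b c
    one_mul := fun a => zero_add a
    mul_one := fun a => add_zero a
    inv_mul_cancel := fun a => neg_add_cancel a
    skew_left_distrib := fun a b c => by
      change a + (b + c) = (a + b) - a + (a + c)
      rw [← add_assoc (a + b - a), sub_add_cancel, add_assoc] }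

theorem comm_of_all (n : ℕ)
    (h : ∀ (A : Type) [Fintype A] [SkewBrace A], Fintype.card A = n →
      (∀ a b : A, a + b = b + a)) (hn : 0 < n)
    (G : Type) [Group G] [Finite G] (hd : Nat.card G ∣ n) (a b : G) : a * b = b * a := by
  obtain ⟨m, rfl⟩ := hd
  have hm : m ≠ 0 := by rintro rfl; simp at hn
  have : NeZero m := ⟨hm⟩
  let := Fintype.ofFinite G
  let : Fintype (Additive G × ZMod m) := Fintype.ofFinite _
  let := trivBrace (Additive G × ZMod m)
  have := h (Additive G × ZMod m) (by
    rw [← Nat.card_eq_fintype_card, Nat.card_prod, Nat.card_zmod]; rfl)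
    (Additive.ofMul a, 0) (Additive.ofMul b, 0)
  exact congrArg (fun x : Additive G × ZMod m => x.1.toMul) this

/-- Heisenberg group. -/
@[ext] structure Heis (R : Type) where
  x : R
  y : R
  z : R

def Heis.equiv (R : Type) : Heis R ≃ R × R × R where
  toFun a := (a.x, a.y, a.z)
  invFun a := ⟨a.1, a.2.1, a.2.2⟩
  left_inv _ := rfl
  right_inv _ := rfl

instance (R : Type) [CommRing R] : Group (Heis R) :=
  { mul := fun a b => ⟨a.x + b.x, a.y + b.y, a.z + b.z + a.x * b.y⟩
    one := ⟨0, 0, 0⟩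
    inv := fun a => ⟨-a.x, -a.y, -a.z + a.x * a.y⟩
    mul_assoc := fun a b c => by
      change Heis.mk _ _ _ = Heis.mk _ _ _
      ext
      · change a.x + b.x + c.x = a.x + (b.x + c.x); ring
      · change a.y + b.y + c.y = a.y + (b.y + c.y); ring
      · change a.z + b.z + a.x * b.y + c.z + (a.x + b.x) * c.y
          = a.z + (b.z + c.z + b.x * c.y) + a.x * (b.y + c.y)
        ring
    one_mul := fun a => by
      ext
      · change 0 + a.x = a.x; ring
      · change 0 + a.y = a.y; ring
      · change 0 + a.z + 0 * a.y = a.z; ring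
    mul_one := fun a => by
      ext
      · change a.x + 0 = a.x; ring
      · change a.y + 0 = a.y; ring
      · change a.z + 0 + a.x * 0 = a.z; ring
    inv_mul_cancel := fun a => by
      ext
      · change -a.x + a.x = 0; ring
      · change -a.y + a.y = 0; ring
      · change -a.z + a.x * a.y + a.z + -a.x * a.y = 0; ring }

/-- Affine group with restricted units. -/
@[ext] structure Aff (F : Type) [Field F] (U : Subgroup Fˣ) where
  x : F
  u : U

def Aff.equiv (F : Type) [Field F] (U : Subgroup Fˣ) : Aff F U ≃ F × U where
  toFun a := (a.x, a.u)
  invFun a := ⟨a.1, a.2⟩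
  left_inv _ := rfl
  right_inv _ := rfl

instance (F : Type) [Field F] (U : Subgroup Fˣ) : Group (Aff F U) :=
  { mul := fun a b => ⟨a.x + (a.u : Fˣ) * b.x, a.u * b.u⟩
    one := ⟨0, 1⟩
    inv := fun a => ⟨-(((a.u⁻¹ : U) : Fˣ) * a.x), a.u⁻¹⟩
    mul_assoc := fun a b c => by
      ext1
      · change a.x + (a.u : Fˣ) * b.x + ((a.u * b.u : U) : Fˣ) * c.x
          = a.x + (a.u : Fˣ) * (b.x + (b.u : Fˣ) * c.x)
        push_cast; ring
      · exact mul_assoc _ _ _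
    one_mul := fun a => by
      ext1
      · change 0 + (((1 : U) : Fˣ) : F) * a.x = a.x
        simp
      · exact one_mul _
    mul_one := fun a => by
      ext1
      · change a.x + _ * 0 = a.x
        simp
      · exact mul_one _
    inv_mul_cancel := fun a => by
      ext1
      · change -(((a.u⁻¹ : U) : Fˣ) * a.x) + (((a.u⁻¹ : U) : Fˣ) : F) * a.x = 0
        simp
      · exact inv_mul_cancel _ }

theorem dir1 (n : ℕ) (hn : 0 < n)
    (h : ∀ (A : Type) [Fintype A] [SkewBrace A], Fintype.card A = n →
      (∀ a b : A, a + b = b + a)) :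
    ((∀ p ∈ n.primeFactors, n.factorization p ≤ 2) ∧
      (∀ p ∈ n.primeFactors, ∀ q ∈ n.primeFactors, p ≠ q →
        ¬ p ∣ q ^ n.factorization q - 1)) := by
  constructor
  · intro p hp
    by_contra! hlt
    have hpp := Nat.prime_of_mem_primeFactors hp
    have : Fact p.Prime := ⟨hpp⟩
    have : Finite (Heis (ZMod p)) := Finite.of_equiv _ (Heis.equiv (ZMod p)).symm
    have hd : Nat.card (Heis (ZMod p)) ∣ n := by
      rw [Nat.card_congr (Heis.equiv _), Nat.card_prod, Nat.card_prod, Nat.card_zmod]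
      have : p * (p * p) = p ^ 3 := by ring
      rw [this]
      exact (hpp.pow_dvd_iff_le_factorization hn.ne').2 hlt
    have := comm_of_all n h hn (Heis (ZMod p)) hd ⟨1, 0, 0⟩ ⟨0, 1, 0⟩
    have := congrArg Heis.z this
    change (0 : ZMod p) + 0 + 1 * 1 = 0 + 0 + 0 * 0 at this
    simp at this
  · intro p hp q hq hpq hdv
    have hpp := Nat.prime_of_mem_primeFactors hp
    have hqp := Nat.prime_of_mem_primeFactors hq
    have : Fact p.Prime := ⟨hpp⟩
    have : Fact q.Prime := ⟨hqp⟩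
    set k := n.factorization q with hk
    have hk0 : k ≠ 0 := by
      have := (hqp.dvd_iff_one_le_factorization hn.ne').1 (Nat.dvd_of_mem_primeFactors hq)
      omega
    have hF := GaloisField.card q k hk0
    have : Finite (GaloisField q k) := Nat.finite_of_card_ne_zero (by
      rw [hF]; exact pow_ne_zero _ hqp.ne_zero)
    have hU : p ∣ Nat.card (GaloisField q k)ˣ := by
      rw [Nat.card_units, hF]; exact hdv
    obtain ⟨u, hu⟩ := exists_prime_orderOf_dvd_card' p hU
    let U := Subgroup.zpowers u
    have : Finite (Aff (GaloisField q k) U) := Finite.of_equiv _ (Aff.equiv _ U).symm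
    have hd : Nat.card (Aff (GaloisField q k) U) ∣ n := by
      rw [Nat.card_congr (Aff.equiv _ _), Nat.card_prod, Nat.card_zpowers, hu, hF]
      apply Nat.Coprime.mul_dvd_of_dvd_of_dvd
      · exact Nat.Coprime.pow_left _ ((Nat.coprime_primes hqp hpp).2 (Ne.symm hpq))
      · exact Nat.ordProj_dvd n q
      · exact Nat.dvd_of_mem_primeFactors hp
    have := comm_of_all n h hn (Aff (GaloisField q k) U) hd ⟨1, 1⟩
      ⟨0, ⟨u, Subgroup.mem_zpowers u⟩⟩
    have := congrArg Aff.x this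
    change (1 : GaloisField q k) + _ * 0 = 0 + (u : GaloisField q k) * 1 at this
    have hu1 : u = 1 := by
      ext; simpa using this.symm
    rw [hu1, orderOf_one] at hu
    exact hpp.one_lt.ne hu

theorem mulAut_no_prime {P : Type} [Group P] [Finite P] (p q k : ℕ) (hp : p.Prime) (hq : q.Prime)
    (hk : k ≤ 2) (hc : Nat.card P = p ^ k) (hpq : p ≠ q) (hd : ¬ q ∣ p ^ k - 1)
    (f : MulAut P) (hf : orderOf f = q) : False := by
  have : Fact q.Prime := ⟨hq⟩
  have hpos : 0 < p := hp.pos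
  have hQ : IsPGroup q (Subgroup.zpowers f) :=
    IsPGroup.of_card (n := 1) (by rw [Nat.card_zpowers, hf, pow_one])
  have hmod := hQ.card_modEq_card_fixedPoints P
  let S : Subgroup P := f.toMonoidHom.eqLocus (MonoidHom.id P)
  have hS : (MulAction.fixedPoints (Subgroup.zpowers f) P) = (S : Set P) := by
    ext x
    rw [MulAction.mem_fixedPoints]
    constructor
    · intro hx
      exact hx ⟨f, Subgroup.mem_zpowers f⟩
    · intro hx g
      have h1 : f ∈ MulAction.stabilizer (MulAut P) x := hx
      exact (Subgroup.zpowers_le.2 h1) g.2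
  rw [hS] at hmod
  change Nat.card P ≡ Nat.card S [MOD q] at hmod
  obtain ⟨j, hj, hjS⟩ := (Nat.dvd_prime_pow hp).1 (hc ▸ Subgroup.card_subgroup_dvd_card S)
  rw [hc, hjS] at hmod
  have h2 : q ∣ p ^ k - p ^ j := (Nat.modEq_iff_dvd' (Nat.pow_le_pow_right hpos hj)).1 hmod.symm
  rcases Nat.eq_zero_or_pos j with rfl | hj0
  · exact hd (by simpa using h2)
  rcases hj.eq_or_lt with rfl | hlt
  · have : S = ⊤ := Subgroup.eq_top_of_card_eq S (by rw [hjS, hc])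
    have hf1 : f = 1 := by
      ext x
      have : x ∈ S := this ▸ Subgroup.mem_top x
      exact this
    rw [hf1, orderOf_one] at hf
    exact hq.one_lt.ne hf
  · obtain rfl : j = 1 := by omega
    obtain rfl : k = 2 := by omega
    have e : p ^ 2 - p ^ 1 = p * (p - 1) := by rw [Nat.mul_sub]; ring_nf
    rw [e] at h2
    rcases hq.dvd_mul.1 h2 with h3 | h3
    · exact hpq ((Nat.prime_dvd_prime_iff_eq hq hp).1 h3).symm
    · apply hd
      have : p - 1 ∣ p ^ 2 - 1 := by
        have := Nat.sub_dvd_pow_sub_pow p 1 2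
        simpa using this
      exact h3.trans this

open scoped commutatorElement in
theorem group_comm (n : ℕ) (hn : 0 < n)
    (h1 : ∀ p ∈ n.primeFactors, n.factorization p ≤ 2)
    (h2 : ∀ p ∈ n.primeFactors, ∀ q ∈ n.primeFactors, p ≠ q →
        ¬ p ∣ q ^ n.factorization q - 1)
    (G : Type) [Group G] [Finite G] (hG : Nat.card G = n) (a b : G) : a * b = b * a := by
  have key : ∀ p : ℕ, p.Prime → p ∣ n → ¬ p ∣ Nat.card (commutator G) := by
    intro p hp hpn
    have : Fact p.Prime := ⟨hp⟩
    have hpm : p ∈ n.primeFactors := Nat.mem_primeFactors.2 ⟨hp, hpn, hn.ne'⟩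
    let P : Sylow p G := default
    have hcP : Nat.card P = p ^ n.factorization p := by rw [P.card_eq_multiplicity, hG]
    have hle := h1 p hpm
    have hge := (hp.dvd_iff_one_le_factorization hn.ne').1 hpn
    have hab : ∀ x y : P, x * y = y * x := by
      rcases (by omega : n.factorization p = 1 ∨ n.factorization p = 2) with e | e
      · rw [e, pow_one] at hcP
        have := isCyclic_of_prime_card hcP
        exact fun x y => (IsCyclic.isMulCommutative (α := P)).is_comm.comm x y
      · rw [e] at hcP
        exact (IsPGroup.isMulCommutative_of_card_eq_prime_sq hcP).is_comm.comm
    have hPC : (P : Subgroup G) ≤ Subgroup.centralizer (P : Set G) := by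
      intro x hx y hy
      exact congrArg Subtype.val (hab ⟨y, hy⟩ ⟨x, hx⟩)
    have hP : Subgroup.normalizer P ≤ Subgroup.centralizer (P : Set G) := by
      rw [← Subgroup.relIndex_eq_one]
      by_contra hne
      obtain ⟨q, hq, hqd⟩ := Nat.exists_prime_and_dvd hne
      have : Fact q.Prime := ⟨hq⟩
      have hqp : p ≠ q := by
        rintro rfl
        have h3 : (Subgroup.centralizer (P : Set G)).relIndex (Subgroup.normalizer P) ∣ (P : Subgroup G).index :=
          (Subgroup.relIndex_dvd_of_le_left _ hPC).trans
            (Subgroup.relIndex_dvd_index_of_le Subgroup.le_normalizer)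
        exact P.not_dvd_index (hqd.trans h3)
      have hqn : q ∣ n := by
        rw [← hG]
        exact hqd.trans ((Subgroup.relIndex_dvd_card _ _).trans (Subgroup.card_subgroup_dvd_card _))
      have hr : q ∣ Nat.card (P : Subgroup G).normalizerMonoidHom.range := by
        rw [← Subgroup.index_ker, Subgroup.normalizerMonoidHom_ker]
        exact hqd
      obtain ⟨f, hf⟩ := exists_prime_orderOf_dvd_card' q hr
      rw [← Subgroup.orderOf_coe] at hf
      exact mulAut_no_prime p q _ hp hq hle hcP hqp
        (h2 q (Nat.mem_primeFactors.2 ⟨hq, hqn, hn.ne'⟩) p hpm hqp.symm) f.1 hf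
    have h4 := MonoidHom.not_dvd_card_ker_transferSylow P hP
    intro hdv
    apply h4
    refine hdv.trans (Subgroup.card_dvd_of_le ?_)
    rw [commutator_eq_closure, Subgroup.closure_le]
    rintro _ ⟨x, y, rfl⟩
    rw [SetLike.mem_coe, MonoidHom.mem_ker, map_commutatorElement, commutatorElement_eq_one_iff_mul_comm]
    exact hab _ _
  have hone : Nat.card (commutator G) = 1 := by
    by_contra hne
    obtain ⟨q, hq, hqd⟩ := Nat.exists_prime_and_dvd hne
    exact key q hq (hqd.trans (hG ▸ Subgroup.card_subgroup_dvd_card _)) hqd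
  have hbot := Subgroup.card_eq_one.1 hone
  have hm : ⁅a, b⁆ ∈ commutator G :=
    Subgroup.commutator_mem_commutator (Subgroup.mem_top a) (Subgroup.mem_top b)
  rw [hbot, Subgroup.mem_bot] at hm
  exact commutatorElement_eq_one_iff_mul_comm.1 hm

/-- Every skew brace of order `n` is a brace (abelian additive group) iff the
prime factorisation of `n` is cube-free and `p ∤ q^{α_q} - 1` for distinct
primes `p, q` dividing `n`. -/
theorem every_skewBrace_is_brace_iff (n : ℕ) (hn : 0 < n) :
    (∀ (A : Type) [Fintype A] [SkewBrace A], Fintype.card A = n →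
      (∀ a b : A, a + b = b + a)) ↔
    ((∀ p ∈ n.primeFactors, n.factorization p ≤ 2) ∧
      (∀ p ∈ n.primeFactors, ∀ q ∈ n.primeFactors, p ≠ q →
        ¬ p ∣ q ^ n.factorization q - 1)) := by
  refine ⟨dir1 n hn, fun ⟨h1, h2⟩ A _ _ hA a b => ?_⟩
  have hc : Nat.card (Multiplicative A) = n := by
    rw [← hA, ← Nat.card_eq_fintype_card]; rfl
  exact group_comm n hn h1 h2 (Multiplicative A) hc (Multiplicative.ofAdd a) (Multiplicative.ofAdd b)
end

section
/- Let n be a natural number with prime factorisation n = p_1^{α_1} ⋯ p_t^{α_t} (the p_i distinct primes). Then every skew brace of order n is two-sided if and only if α_i ≤ 2 for every i and p_i does not divide p_j^{α_j} − 1 for all i ≠ j. -/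
/-- data for a non two-sided brace of abelian type -/
structure BadData (A : Type) [AddCommGroup A] where
  L : A → A → A
  add' : ∀ a b c, L a (b + c) = L a b + L a c
  zero' : ∀ b, L 0 b = b
  mul' : ∀ a b c, L (a + L a b) c = L a (L b c)
  inv' : ∀ a, ∃ b, a + L a b = 0
  bad : ∃ a b c, L (a + b) c + c ≠ L a c + L b c

theorem BadData.L_zero {A : Type} [AddCommGroup A] (D : BadData A) (a : A) : D.L a 0 = 0 := by
  have := D.add' a 0 0
  simpa using this

/-- product with a cyclic group -/
def BadData.prod {A : Type} [AddCommGroup A] (D : BadData A) (m : ℕ) : BadData (A × ZMod m) where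
  L a b := (D.L a.1 b.1, b.2)
  add' a b c := by simp [D.add']
  zero' b := by simp [D.zero']
  mul' a b c := by simp [D.mul']
  inv' a := by
    obtain ⟨b, hb⟩ := D.inv' a.1
    exact ⟨(b, -a.2), by ext <;> simp [hb]⟩
  bad := by
    obtain ⟨a, b, c, h⟩ := D.bad
    exact ⟨(a, 0), (b, 0), (c, 0), fun e => h (by simpa using congrArg Prod.fst e)⟩

/-- multiplicative group of the brace -/
noncomputable def BadData.group {A : Type} [AddCommGroup A] (D : BadData A) : Group A :=
  letI : Mul A := ⟨fun a b => a + D.L a b⟩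
  letI : One A := ⟨0⟩
  letI : Inv A := ⟨fun a => (D.inv' a).choose⟩
  Group.ofRightAxioms
    (fun a b c => by
      change (a + D.L a b) + D.L (a + D.L a b) c = a + D.L a (b + D.L b c)
      rw [D.mul', D.add', add_assoc])
    (fun a => by change a + D.L a 0 = a; rw [D.L_zero, add_zero])
    (fun a => (D.inv' a).choose_spec)

/-- the brace -/
noncomputable def BadData.brace {A : Type} [AddCommGroup A] (D : BadData A) : SkewBrace A :=
  { (inferInstance : AddGroup A), D.group with
    skew_left_distrib := fun a b c => by
      change a + D.L a (b + c) = (a + D.L a b) - a + (a + D.L a c)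
      rw [D.add']; abel }

theorem BadData.contra {A : Type} [AddCommGroup A] [Fintype A] (D : BadData A) {n : ℕ} (hn : 0 < n)
    (hd : Fintype.card A ∣ n)
    (h : ∀ (A : Type) [Fintype A] [SkewBrace A], Fintype.card A = n →
      (∀ a b c : A, (a + b) * c = a * c - c + b * c)) : False := by
  obtain ⟨m, rfl⟩ := hd
  have : NeZero m := ⟨by rintro rfl; simp at hn⟩
  let D' := D.prod m
  obtain ⟨a, b, c, hb⟩ := D'.bad
  have := @h (A × ZMod m) _ D'.brace (by simp [ZMod.card]) a b c
  change (a + b) + D'.L (a + b) c = (a + D'.L a c) - c + (b + D'.L b c) at this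
  apply hb
  have e : D'.L (a + b) c = D'.L a c - c + D'.L b c := by
    apply add_left_cancel (a := a + b)
    rw [this]; abel
  rw [e]; abel

theorem bad_of_odd (R : Type) [CommRing R] (h2 : (2 : R) ≠ 0) : Nonempty (BadData (R × R × R)) :=
  ⟨{ L := fun a b => (b.1 + 2 * a.2.2 * b.2.1 + a.2.2 ^ 2 * b.2.2, b.2.1 + a.2.2 * b.2.2, b.2.2)
     add' := by rintro ⟨a, b, c⟩ ⟨d, e, f⟩ ⟨g, h, i⟩; simp; constructor <;> ring
     zero' := by rintro ⟨a, b, c⟩; simp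
     mul' := by rintro ⟨a, b, c⟩ ⟨d, e, f⟩ ⟨g, h, i⟩; simp; constructor <;> ring
     inv' := by
      rintro ⟨x, y, z⟩
      refine ⟨(-x + 2 * z * y - z ^ 3, -y + z ^ 2, -z), ?_⟩
      simp; constructor <;> ring
     bad := ⟨(0, 0, 1), (0, 0, 1), (0, 0, 1), fun e => h2 (by
      have := congrArg Prod.fst e
      simp at this
      linear_combination this)⟩ }⟩

theorem bad_eight : Nonempty (BadData (ZMod 8)) :=
  ⟨{ L := fun a b => if a.val % 2 = 0 then b else -b
     add' := by decide
     zero' := by decide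
     mul' := by decide
     inv' := by decide
     bad := by decide }⟩

theorem bad_field (F : Type) [Field F] (z : Fˣ) (hz : z ≠ 1) :
    Nonempty (BadData (F × Additive (Subgroup.zpowers z))) :=
  ⟨{ L := fun a b => (((a.2.toMul : Fˣ) : F) * b.1, b.2)
     add' := by intro a b c; simp [mul_add]
     zero' := by intro a; simp
     mul' := by intro a b c; simp [mul_assoc]
     inv' := by
      intro a
      refine ⟨(-(((a.2.toMul : Fˣ)⁻¹ : Fˣ) : F) * a.1, -a.2), ?_⟩
      ext <;> simp
     bad := by
      let g : Additive (Subgroup.zpowers z) := Additive.ofMul ⟨z, Subgroup.mem_zpowers z⟩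
      refine ⟨(0, g), (0, g), (1, 0), fun e => hz ?_⟩
      have := congrArg Prod.fst e
      simp [g] at this
      have h2 : ((z : F) - 1) ^ 2 = 0 := by linear_combination this
      have h3 : (z : F) = 1 := sub_eq_zero.mp (pow_eq_zero_iff (two_ne_zero) |>.mp h2)
      exact Units.ext h3 }⟩

theorem forward (n : ℕ) (hn : 0 < n)
    (h : ∀ (A : Type) [Fintype A] [SkewBrace A], Fintype.card A = n →
      (∀ a b c : A, (a + b) * c = a * c - c + b * c)) :
    ((∀ p ∈ n.primeFactors, n.factorization p ≤ 2) ∧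
      (∀ p ∈ n.primeFactors, ∀ q ∈ n.primeFactors, p ≠ q →
        ¬ p ∣ q ^ n.factorization q - 1)) := by
  constructor
  · intro p hp
    by_contra! h3
    have hpp := Nat.prime_of_mem_primeFactors hp
    have : Fact p.Prime := ⟨hpp⟩
    have hd : p ^ 3 ∣ n := (hpp.pow_dvd_iff_le_factorization hn.ne').2 h3
    by_cases h2 : p = 2
    · subst h2
      obtain ⟨D⟩ := bad_eight
      exact D.contra hn (by simpa [ZMod.card] using hd) h
    · have h2' : (2 : ZMod p) ≠ 0 := by
        intro e
        have : ((2 : ℕ) : ZMod p) = 0 := by exact_mod_cast e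
        rw [ZMod.natCast_eq_zero_iff] at this
        exact h2 ((Nat.prime_dvd_prime_iff_eq hpp Nat.prime_two).1 this)
      obtain ⟨D⟩ := bad_of_odd (ZMod p) h2'
      refine D.contra hn ?_ h
      simp only [Fintype.card_prod, ZMod.card]
      convert hd using 1; ring
  · intro p hp q hq hpq hdvd
    have hpp := Nat.prime_of_mem_primeFactors hp
    have hqp := Nat.prime_of_mem_primeFactors hq
    have : Fact p.Prime := ⟨hpp⟩
    have : Fact q.Prime := ⟨hqp⟩
    have ha : n.factorization q ≠ 0 :=
      (hqp.factorization_pos_of_dvd hn.ne' (Nat.dvd_of_mem_primeFactors hq)).ne'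
    let F := GaloisField q (n.factorization q)
    have : Fintype F := Fintype.ofFinite F
    have hF : Nat.card F = q ^ n.factorization q := GaloisField.card q _ ha
    have hU : Nat.card Fˣ = q ^ n.factorization q - 1 := by rw [Nat.card_units, hF]
    obtain ⟨z, hz⟩ := exists_prime_orderOf_dvd_card' (G := Fˣ) p (by rw [hU]; exact hdvd)
    have hz1 : z ≠ 1 := by rintro rfl; simp at hz; exact hpp.one_lt.ne hz
    obtain ⟨D⟩ := bad_field F z hz1
    have : Fintype (Additive (Subgroup.zpowers z)) := Fintype.ofFinite _
    refine D.contra hn ?_ h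
    rw [Fintype.card_prod, ← Nat.card_eq_fintype_card, ← Nat.card_eq_fintype_card, hF]
    have : Nat.card (Additive (Subgroup.zpowers z)) = p := by
      rw [← hz, ← Nat.card_zpowers]; rfl
    rw [this]
    exact Nat.Coprime.mul_dvd_of_dvd_of_dvd
      (Nat.Coprime.pow_left _ ((Nat.coprime_primes hqp hpp).2 hpq.symm))
      (Nat.ordProj_dvd n q) (Nat.dvd_of_mem_primeFactors hp)

theorem act_trivial {Q P : Type*} [Group Q] [Finite Q] [Group P] [Finite P] [MulDistribMulAction Q P]
    {p q a : ℕ} (hp : p.Prime) (hq : q.Prime) (hpq : q ≠ p) (hQ : IsPGroup q Q)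
    (hP : Nat.card P = p ^ a) (ha : a ≤ 2) (hd : ¬ q ∣ p ^ a - 1) (x : Q) (y : P) : x • y = y := by
  have : Fact q.Prime := ⟨hq⟩
  have hmod := hQ.card_modEq_card_fixedPoints P
  have hS : Nat.card (FixedPoints.subgroup Q P) = Nat.card (MulAction.fixedPoints Q P) := rfl
  rw [← hS, hP] at hmod
  have hdv : Nat.card (FixedPoints.subgroup Q P) ∣ p ^ a := hP ▸ Subgroup.card_subgroup_dvd_card _
  obtain ⟨k, hk, hk'⟩ := (Nat.dvd_prime_pow hp).1 hdv
  rw [hk'] at hmod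
  have hka : k = a := by
    by_contra hne
    have hlt : k < a := lt_of_le_of_ne hk hne
    have h1 : q ∣ p ^ a - p ^ k :=
      (Nat.modEq_iff_dvd' (Nat.pow_le_pow_right hp.pos hk)).1 hmod.symm
    have h2 : p ^ a - p ^ k = p ^ k * (p ^ (a - k) - 1) := by
      rw [Nat.mul_sub, ← pow_add, mul_one, Nat.add_sub_cancel' hk]
    rw [h2] at h1
    rcases hq.dvd_mul.1 h1 with h3 | h3
    · exact hpq ((Nat.prime_dvd_prime_iff_eq hq hp).1 (hq.dvd_of_dvd_pow h3))
    · apply hd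
      refine h3.trans (Nat.pow_sub_one_dvd_pow_sub_one p ?_)
      have : k = 0 ∨ (k = 1 ∧ a = 2) := by omega
      rcases this with rfl | ⟨rfl, rfl⟩ <;> simp
  have htop : FixedPoints.subgroup Q P = ⊤ :=
    Subgroup.eq_top_of_card_eq _ (by rw [hk', hP, hka])
  have hy : y ∈ FixedPoints.subgroup Q P := by rw [htop]; trivial
  exact hy x

theorem comm_of_card (n : ℕ) (hn : 0 < n)
    (h1 : ∀ p ∈ n.primeFactors, n.factorization p ≤ 2)
    (h2 : ∀ p ∈ n.primeFactors, ∀ q ∈ n.primeFactors, p ≠ q → ¬ p ∣ q ^ n.factorization q - 1)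
    (G : Type*) [Group G] [Finite G] (hG : Nat.card G = n) (a b : G) : a * b = b * a := by
  have key : ∀ p ∈ n.primeFactors, ¬ p ∣ Nat.card (commutator G) := by
    intro p hp
    have hpp := Nat.prime_of_mem_primeFactors hp
    have : Fact p.Prime := ⟨hpp⟩
    obtain ⟨P⟩ : Nonempty (Sylow p G) := inferInstance
    have hcP : Nat.card P = p ^ n.factorization p := by rw [P.card_eq_multiplicity, hG]
    have hfp : n.factorization p ≠ 0 :=
      (hpp.factorization_pos_of_dvd hn.ne' (Nat.dvd_of_mem_primeFactors hp)).ne'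
    have hcomm : IsMulCommutative P := by
      have := h1 p hp
      have h12 : n.factorization p = 1 ∨ n.factorization p = 2 := by omega
      rcases h12 with h | h
      · rw [h, pow_one] at hcP
        have := isCyclic_of_prime_card hcP
        exact ⟨⟨fun a b => (IsCyclic.commGroup (α := P)).mul_comm a b⟩⟩
      · rw [h] at hcP
        exact IsPGroup.isMulCommutative_of_card_eq_prime_sq hcP
    have hPC : (P : Subgroup G) ≤ Subgroup.centralizer (P : Set G) := Subgroup.le_centralizer _
    have hNC : Subgroup.normalizer (P : Set G) ≤ Subgroup.centralizer (P : Set G) := by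
      rw [← Subgroup.relIndex_eq_one]
      by_contra hne
      obtain ⟨q, hq, hqd⟩ := Nat.exists_prime_and_dvd hne
      have : Fact q.Prime := ⟨hq⟩
      have hqi : q ∣ (P : Subgroup G).index :=
        hqd.trans ((Subgroup.relIndex_dvd_of_le_left _ hPC).trans
          (Subgroup.relIndex_dvd_index_of_le Subgroup.le_normalizer))
      have hqp : q ≠ p := by
        rintro rfl
        exact P.not_dvd_index hqi
      have hqn : q ∈ n.primeFactors := by
        rw [Nat.mem_primeFactors]
        exact ⟨hq, hqi.trans (hG ▸ Subgroup.index_dvd_card _), hn.ne'⟩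
      obtain ⟨Q⟩ : Nonempty (Sylow q (Subgroup.normalizer (P : Set G))) := inferInstance
      have hQC : (Q : Subgroup _) ≤
          (Subgroup.centralizer (P : Set G)).subgroupOf (Subgroup.normalizer (P : Set G)) := by
        intro x hx
        let _ := MulDistribMulAction.compHom P
          ((P : Subgroup G).normalizerMonoidHom.comp (Q : Subgroup _).subtype)
        have := Subgroup.normalizerMonoidHom_ker (P : Subgroup G)
        refine this.le ?_
        rw [MonoidHom.mem_ker]
        ext y : 1
        exact act_trivial hpp hq hqp Q.2 hcP (h1 p hp) (h2 q hqn p hp hqp) (⟨x, hx⟩ : Q) y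
      exact Q.not_dvd_index (hqd.trans (Subgroup.index_dvd_of_le hQC))
    intro hdvd
    refine MonoidHom.not_dvd_card_ker_transferSylow P hNC (hdvd.trans (Subgroup.card_dvd_of_le ?_))
    let _ : CommGroup P := { (inferInstance : Group P) with mul_comm := hcomm.1.1 }
    exact Abelianization.commutator_subset_ker (MonoidHom.transferSylow P hNC)
  have hone : Nat.card (commutator G) = 1 := by
    by_contra hne
    obtain ⟨q, hq, hqd⟩ := Nat.exists_prime_and_dvd hne
    refine key q ?_ hqd
    rw [Nat.mem_primeFactors]
    exact ⟨hq, hqd.trans (hG ▸ Subgroup.card_subgroup_dvd_card _), hn.ne'⟩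
  have hbot : commutator G = ⊥ := Subgroup.card_eq_one.1 hone
  have hc : a ∈ Subgroup.center G := by
    rw [(commutator_eq_bot_iff_center_eq_top G).1 hbot]; trivial
  exact ((Subgroup.mem_center_iff.1 hc) b).symm

/-- Every skew brace of order `n` is two-sided
(`(a + b) ∘ c = a ∘ c - c + b ∘ c`) iff the prime factorisation of `n` is
cube-free and `p ∤ q^{α_q} - 1` for distinct primes `p, q` dividing `n`. -/
theorem every_skewBrace_is_two_sided_iff (n : ℕ) (hn : 0 < n) :
    (∀ (A : Type) [Fintype A] [SkewBrace A], Fintype.card A = n →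
      (∀ a b c : A, (a + b) * c = a * c - c + b * c)) ↔
    ((∀ p ∈ n.primeFactors, n.factorization p ≤ 2) ∧
      (∀ p ∈ n.primeFactors, ∀ q ∈ n.primeFactors, p ≠ q →
        ¬ p ∣ q ^ n.factorization q - 1)) := by
  refine ⟨forward n hn, ?_⟩
  rintro ⟨h1, h2⟩ A _ _ hA a b c
  have hc := comm_of_card n hn h1 h2 A (by rw [Nat.card_eq_fintype_card, hA])
  rw [hc (a + b) c, hc a c, hc b c, SkewBrace.skew_left_distrib]
end

section
/- Let n be a natural number with prime factorisation n = p_1^{α_1} ⋯ p_t^{α_t} (the p_i distinct primes). Then every skew brace of order n is a bi-skew brace if and only if α_i ≤ 2 for every i and p_i does not divide p_j^{α_j} − 1 for all i ≠ j. -/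
theorem aux_aut_fix {P : Type*} [Group P] [Finite P] {p q k : ℕ} (hp : p.Prime) (hq : q.Prime)
    (hpq : q ≠ p) (hk : k ≤ 2) (hcard : Nat.card P = p ^ k) (hd : ¬ q ∣ p ^ k - 1)
    (σ : MulAut P) (hσ : orderOf σ = q) : False := by
  haveI := Fact.mk hq
  have hz : IsPGroup q (Subgroup.zpowers σ) :=
    IsPGroup.of_card (n := 1) (by rw [Nat.card_zpowers, hσ, pow_one])
  have hmod := hz.card_modEq_card_fixedPoints P
  let F : Subgroup P :=
    { carrier := MulAction.fixedPoints (Subgroup.zpowers σ) P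
      mul_mem' := by
        intro a b ha hb g
        rw [smul_mul', ha g, hb g]
      one_mem' := by intro g; exact smul_one g
      inv_mem' := by
        intro a ha g
        rw [smul_inv', ha g] }
  have hF : Nat.card (MulAction.fixedPoints (Subgroup.zpowers σ) P) = Nat.card F := rfl
  have hdvd : Nat.card F ∣ p ^ k := hcard ▸ F.card_subgroup_dvd_card
  obtain ⟨j, hj, hjc⟩ := (Nat.dvd_prime_pow hp).1 hdvd
  rw [hF, hcard, hjc] at hmod
  have hcop : Nat.Coprime q (p ^ j) := Nat.Coprime.pow_right _ ((Nat.coprime_primes hq hp).2 hpq)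
  have h1 : q ∣ p ^ k - p ^ j := (Nat.modEq_iff_dvd' (Nat.pow_le_pow_right hp.pos hj)).1 hmod.symm
  have h2 : p ^ k - p ^ j = p ^ j * (p ^ (k - j) - 1) := by
    rw [Nat.mul_sub, ← pow_add, Nat.add_sub_cancel' hj, mul_one]
  rw [h2] at h1
  have h3 : q ∣ p ^ (k - j) - 1 := hcop.dvd_of_dvd_mul_left h1
  have hjk : j = k := by
    by_contra hne
    apply hd
    refine h3.trans ?_
    apply Nat.pow_sub_one_dvd_pow_sub_one
    have : j < k := lt_of_le_of_ne hj hne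
    interval_cases k <;> interval_cases j <;> simp
  have hFtop : F = ⊤ := by
    apply Subgroup.eq_top_of_card_eq
    rw [hjc, hcard, hjk]
  have : σ = 1 := by
    ext x
    have hx : x ∈ F := hFtop ▸ Subgroup.mem_top x
    exact hx ⟨σ, Subgroup.mem_zpowers σ⟩
  rw [this, orderOf_one] at hσ
  exact hq.one_lt.ne hσ

open scoped commutatorElement in
theorem aux_comm {G : Type*} [Group G] [Finite G]
    (h1 : ∀ p ∈ (Nat.card G).primeFactors, (Nat.card G).factorization p ≤ 2)
    (h2 : ∀ p ∈ (Nat.card G).primeFactors, ∀ q ∈ (Nat.card G).primeFactors, p ≠ q →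
        ¬ p ∣ q ^ (Nat.card G).factorization q - 1) (a b : G) : a * b = b * a := by
  have hn : Nat.card G ≠ 0 := Nat.card_pos.ne'
  rw [← commutatorElement_eq_one_iff_mul_comm]
  rw [← orderOf_eq_one_iff]
  by_contra hne
  obtain ⟨p, hp, hpd⟩ := Nat.exists_prime_and_dvd hne
  have hpG : p ∈ (Nat.card G).primeFactors :=
    Nat.mem_primeFactors.2 ⟨hp, hpd.trans (orderOf_dvd_natCard _), hn⟩
  haveI := Fact.mk hp
  obtain ⟨P⟩ : Nonempty (Sylow p G) := inferInstance
  have hcard := P.card_eq_multiplicity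
  have hk := h1 p hpG
  have hcomm : ∀ x y : P, x * y = y * x := by
    have hk1 : (Nat.card G).factorization p ≠ 0 :=
      (hp.factorization_pos_of_dvd hn (Nat.dvd_of_mem_primeFactors hpG)).ne'
    have : (Nat.card G).factorization p = 1 ∨ (Nat.card G).factorization p = 2 := by omega
    rcases this with h | h <;> rw [h] at hcard
    · rw [pow_one] at hcard
      haveI := isCyclic_of_prime_card hcard
      letI : CommGroup P := IsCyclic.commGroup
      intro x y; exact mul_comm x y
    · exact (IsPGroup.isMulCommutative_of_card_eq_prime_sq hcard).is_comm.comm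
  have hNC : Subgroup.normalizer (P : Set G) ≤ Subgroup.centralizer (P : Set G) := by
    let φ := (P : Subgroup G).normalizerMonoidHom
    have hker : φ.ker = (Subgroup.centralizer (P : Set G)).subgroupOf
      (Subgroup.normalizer (P : Set G)) := Subgroup.normalizerMonoidHom_ker _
    suffices h : Nat.card φ.range = 1 by
      rw [← Subgroup.index_ker, Subgroup.index_eq_one, hker, Subgroup.subgroupOf_eq_top] at h
      exact h
    by_contra hr
    obtain ⟨q, hq, hqd⟩ := Nat.exists_prime_and_dvd hr
    haveI := Fact.mk hq
    have hqN : q ∣ Nat.card G :=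
      (hqd.trans (Subgroup.card_range_dvd φ)).trans (Subgroup.card_subgroup_dvd_card _)
    by_cases hqp : q = p
    · subst hqp
      rw [← Subgroup.index_ker, hker] at hqd
      have hle : (P : Subgroup G) ≤ Subgroup.centralizer (P : Set G) := by
        intro x hx
        rw [Subgroup.mem_centralizer_iff]
        intro y hy
        exact congrArg Subtype.val (hcomm ⟨y, hy⟩ ⟨x, hx⟩)
      have hle2 : (P : Subgroup G).subgroupOf (Subgroup.normalizer (P : Set G)) ≤
        (Subgroup.centralizer (P : Set G)).subgroupOf (Subgroup.normalizer (P : Set G)) :=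
        Subgroup.comap_mono hle
      have h5 := hqd.trans (Subgroup.index_dvd_of_le hle2)
      have h6 := Subgroup.relIndex_mul_index
        (Subgroup.le_normalizer : (P : Subgroup G) ≤ Subgroup.normalizer (P : Set G))
      exact P.not_dvd_index (h6 ▸ h5.mul_right _)
    · obtain ⟨σ, hσ⟩ := exists_prime_orderOf_dvd_card' (G := φ.range) q hqd
      refine aux_aut_fix hp hq hqp hk hcard
        (h2 q (Nat.mem_primeFactors.2 ⟨hq, hqN, hn⟩) p hpG hqp) (σ : MulAut P) ?_
      rw [← hσ, Subgroup.orderOf_coe]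
  have hmem : ⁅a, b⁆ ∈ (MonoidHom.transferSylow P hNC).ker := by
    rw [MonoidHom.mem_ker, map_commutatorElement, commutatorElement_eq_one_iff_mul_comm]
    exact hcomm _ _
  apply MonoidHom.not_dvd_card_ker_transferSylow P hNC
  exact hpd.trans (Subgroup.orderOf_dvd_natCard _ hmem)

theorem aux_nil {A : Type*} [AddCommGroup A] [Finite A]
    (h1 : ∀ p ∈ (Nat.card A).primeFactors, (Nat.card A).factorization p ≤ 2)
    (f g : A →+ A) (hfg : ∀ x, f (g x) = g (f x))
    (hf : ∀ k x, f^[k+1] x = x → x = 0) (hg : ∀ k x, g^[k+1] x = x → x = 0) (b : A) :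
    f (g b) = 0 := by
  have key : ∀ (f : A →+ A), (∀ k x, f^[k+1] x = x → x = 0) → ∀ Q : AddSubgroup A,
      (∀ x ∈ Q, f x ∈ Q) → Q ≠ ⊥ → ∃ x ∈ Q, x ≠ 0 ∧ f x = 0 := by
    intro f hf Q hQ hne
    by_contra! hcon
    obtain ⟨⟨x, hx⟩, hx1⟩ := AddSubgroup.ne_bot_iff_exists_ne_zero.1 hne
    have hx0 : x ≠ 0 := fun h => hx1 (Subtype.ext h)
    let F : Q → Q := fun x => ⟨f x, hQ x x.2⟩
    have hinj : Function.Injective F := by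
      intro u v huv
      have huv' : f u = f v := congrArg Subtype.val huv
      by_contra hne
      refine hcon (u - v) (Q.sub_mem u.2 v.2) (fun h => hne (Subtype.ext (sub_eq_zero.1 h))) ?_
      rw [map_sub, huv', sub_self]
    obtain ⟨k, hk, hper⟩ := Function.mem_periodicPts.1 (hinj.mem_periodicPts ⟨x, hx⟩)
    have hit : ∀ k (y : Q), ((F^[k] y : Q) : A) = f^[k] y := by
      intro k
      induction k with
      | zero => intro y; rfl
      | succ k ih => intro y; rw [Function.iterate_succ_apply, Function.iterate_succ_apply, ih]
    obtain ⟨k, rfl⟩ : ∃ j, k = j + 1 := ⟨k - 1, by omega⟩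
    apply hx0
    apply hf k
    have := congrArg Subtype.val (hper : F^[k+1] _ = _)
    rwa [hit] at this
  have hn : Nat.card A ≠ 0 := Nat.card_pos.ne'
  by_contra hx
  have hne : addOrderOf (f (g b)) ≠ 1 := by rwa [Ne, AddMonoid.addOrderOf_eq_one_iff]
  obtain ⟨p, hp, hpd⟩ := Nat.exists_prime_and_dvd hne
  haveI := Fact.mk hp
  have hpA : p ∈ (Nat.card A).primeFactors :=
    Nat.mem_primeFactors.2 ⟨hp, hpd.trans (addOrderOf_dvd_natCard _), hn⟩
  have hα := h1 p hpA
  set n := Nat.card A with hndef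
  set α := n.factorization p with hαdef
  set m := n / p ^ α with hm
  have hmn : p ^ α * m = n := Nat.ordProj_mul_ordCompl_eq_self n p
  have hpm : ¬ p ∣ m := Nat.not_dvd_ordCompl hp hn
  have hx' : f (g (m • b)) ≠ 0 := by
    rw [map_nsmul, map_nsmul]
    intro h
    exact hpm (hpd.trans (addOrderOf_dvd_of_nsmul_eq_zero h))
  let P : AddSubgroup A := (nsmulAddMonoidHom (α := A) (p ^ α)).ker
  have hP : ∀ x, x ∈ P ↔ p ^ α • x = 0 := fun x => Iff.rfl
  have hbP : m • b ∈ P := by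
    rw [hP, smul_smul, hmn, hndef]
    exact card_nsmul_eq_zero'
  have hPn : Nat.card P ∣ n := AddSubgroup.card_addSubgroup_dvd_card P
  have hPpos : Nat.card P ≠ 0 := Nat.card_pos.ne'
  obtain ⟨k, hk⟩ : ∃ k, Nat.card P = p ^ k := by
    refine ⟨_, Nat.eq_prime_pow_of_unique_prime_dvd hPpos ?_⟩
    intro q hq hqd
    haveI := Fact.mk hq
    obtain ⟨y, hy⟩ := exists_prime_addOrderOf_dvd_card' (G := P) q hqd
    have hy2 : p ^ α • y = 0 := Subtype.ext (y.2)
    have := addOrderOf_dvd_of_nsmul_eq_zero hy2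
    rw [hy] at this
    exact (Nat.prime_dvd_prime_iff_eq hq hp).1 (hq.dvd_of_dvd_pow this)
  have hk2 : k ≤ 2 := by
    refine le_trans ?_ hα
    exact (hp.pow_dvd_iff_le_factorization hn).1 (hk ▸ hPn)
  have hgP : ∀ (f : A →+ A), ∀ x ∈ P, f x ∈ P := by
    intro f x hx
    rw [hP] at hx ⊢
    rw [← map_nsmul, hx, map_zero]
  let gP : P →+ P := (g.comp P.subtype).codRestrict P (fun x => hgP g x x.2)
  have hgPv : ∀ x : P, (gP x : A) = g x := fun x => rfl
  let b' : P := ⟨m • b, hbP⟩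
  have hgb : gP b' ≠ 0 := by
    intro h
    apply hx'
    have : g (m • b) = 0 := congrArg Subtype.val h
    rw [this, map_zero]
  have hPb : P ≠ ⊥ := by
    intro h
    apply hgb
    have : b' = 0 := by
      apply Subtype.ext
      have := hbP
      rw [h] at this
      exact this
    rw [this, map_zero]
  obtain ⟨z, hzP, hz0, hz⟩ := key g hg P (hgP g) hPb
  -- range of gP has order p
  let Q : AddSubgroup A := P.map g
  have hQr : Nat.card Q = Nat.card gP.range := by
    have : Q = gP.range.map P.subtype := by
      ext x
      constructor
      · rintro ⟨y, hy, rfl⟩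
        exact ⟨gP ⟨y, hy⟩, ⟨_, rfl⟩, rfl⟩
      · rintro ⟨_, ⟨y, rfl⟩, rfl⟩
        exact ⟨y, y.2, rfl⟩
    rw [this]
    exact AddSubgroup.card_map_of_injective P.subtype_injective
  have hmul : Nat.card gP.ker * Nat.card gP.range = p ^ k := by
    rw [← AddSubgroup.index_ker, AddSubgroup.card_mul_index, hk]
  have hker1 : Nat.card gP.ker ≠ 1 := by
    intro h
    rw [AddSubgroup.card_eq_one] at h
    have : (⟨z, hzP⟩ : P) ∈ gP.ker := Subtype.ext hz
    rw [h] at this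
    exact hz0 (congrArg Subtype.val this)
  obtain ⟨i, hi, hic⟩ := (Nat.dvd_prime_pow hp).1 (Dvd.intro _ hmul)
  obtain ⟨j, hj, hjc⟩ := (Nat.dvd_prime_pow hp).1 (Dvd.intro_left _ hmul)
  have hij : i + j = k := by
    rw [hic, hjc, ← pow_add] at hmul
    exact Nat.pow_right_injective hp.two_le hmul
  have hi0 : i ≠ 0 := by rintro rfl; simp at hic; exact hker1 (by simp [hic])
  have hj1 : j ≤ 1 := by omega
  have hgbQ : g (m • b) ∈ Q := ⟨m • b, hbP, rfl⟩
  have hQ0 : Q ≠ ⊥ := by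
    intro h
    rw [h] at hgbQ
    exact hgb (Subtype.ext hgbQ)
  have hfQ : ∀ x ∈ Q, f x ∈ Q := by
    rintro _ ⟨y, hy, rfl⟩
    exact ⟨f y, hgP f y hy, (hfg y).symm⟩
  obtain ⟨w, hwQ, hw0, hw⟩ := key f hf Q hfQ hQ0
  -- multiples of w fill Q
  have hcQ : Nat.card Q = p := by
    rw [hQr, hjc]
    have : j ≠ 0 := by
      rintro rfl
      apply hQ0
      rw [← AddSubgroup.card_eq_one, hQr, hjc, pow_zero]
    have : j = 1 := by omega
    rw [this, pow_one]
  have hle : AddSubgroup.zmultiples w ≤ Q := by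
    rw [AddSubgroup.zmultiples_le]; exact hwQ
  have hdv := AddSubgroup.card_dvd_of_le hle
  rw [hcQ, Nat.dvd_prime hp] at hdv
  have heq : AddSubgroup.zmultiples w = Q := by
    rcases hdv with h | h
    · exfalso
      rw [AddSubgroup.card_eq_one, AddSubgroup.zmultiples_eq_bot] at h
      exact hw0 h
    · apply AddSubgroup.eq_of_le_of_card_ge hle
      rw [h, hcQ]
  rw [← heq] at hgbQ
  obtain ⟨t, ht⟩ := hgbQ
  apply hx'
  rw [← ht]
  simp [hw]

theorem aux_biskew {A : Type*} [AddCommGroup A] [Group A] [Finite A]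
    (h1 : ∀ p ∈ (Nat.card A).primeFactors, (Nat.card A).factorization p ≤ 2)
    (hc : ∀ a b : A, a * b = b * a)
    (hd : ∀ a b c : A, a * (b + c) = a * b - a + a * c) (a b c : A) :
    a + b * c = (a + b) * a⁻¹ * (a + c) := by
  have h10 : (1 : A) = 0 := by
    have := hd 1 0 0
    simpa using this
  let d : A → A →+ A := fun a =>
    { toFun := fun b => a * b - a - b
      map_zero' := by rw [← h10, mul_one, h10]; simp
      map_add' := by intro x y; rw [hd]; abel }
  have dd : ∀ a b, a * b = a + b + d a b := by
    intro a b; change _ = a + b + (a * b - a - b); abel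
  have dcomm : ∀ a b, d a b = d b a := by
    intro a b; change a * b - a - b = b * a - b - a; rw [hc]; abel
  have dadd : ∀ a b c, d (a + b) c = d a c + d b c := by
    intro a b c; rw [dcomm, map_add, dcomm c a, dcomm c b]
  have dassoc : ∀ a b c, d (d a b) c = d a (d b c) := by
    intro a b c
    have := mul_assoc a b c
    simp only [dd, map_add, dadd] at this
    have h2 : d (d a b) c - d a (d b c) = 0 := by
      rw [← sub_eq_zero] at this
      rw [← this]; abel
    exact sub_eq_zero.1 h2
  have hit : ∀ a k x, (d a)^[k+1] x = d ((d a)^[k] a) x := by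
    intro a k
    induction k with
    | zero => intro x; rfl
    | succ k ih =>
      intro x
      rw [Function.iterate_succ_apply', ih, ← dassoc, Function.iterate_succ_apply' _ k a]
  have hper : ∀ a k x, (d a)^[k+1] x = x → x = 0 := by
    intro a k x h
    rw [hit] at h
    set e := (d a)^[k] a
    have h3 : (-e) * x = -e := by
      rw [dd, dcomm, map_neg, dcomm, h]; abel
    rw [← h10]
    exact mul_eq_left.1 h3
  have htri : ∀ a b c, d a (d b c) = 0 := by
    intro a b c
    refine aux_nil h1 (d a) (d b) ?_ (hper a) (hper b) c
    intro x
    rw [← dassoc, dcomm a b, dassoc]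
  have hinv : a + a⁻¹ + d a a⁻¹ = 0 := by rw [← dd, mul_inv_cancel, h10]
  have htri' : ∀ a b c, d (d a b) c = 0 := fun a b c => by rw [dassoc, htri]
  have hae : d b a + d b a⁻¹ = 0 := by
    have := congrArg (d b) hinv
    rwa [map_add, map_add, htri, add_zero, map_zero] at this
  have hca : d a⁻¹ a = d a a⁻¹ := dcomm _ _
  have hcc : d a c + d a⁻¹ c = 0 := by
    have := congrArg (fun x => d c x) hinv
    simp only [map_add, htri, add_zero, map_zero] at this
    rwa [dcomm a, dcomm a⁻¹]
  have haa : d a a + d a a⁻¹ = 0 := by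
    have := congrArg (d a) hinv
    rwa [map_add, map_add, htri, add_zero, map_zero] at this
  simp only [dd, map_add, dadd, htri', add_zero]
  rw [hca]
  have : a + b + a⁻¹ + (d a a⁻¹ + d b a⁻¹) + (a + c) + (d a a + d b a + d a a⁻¹ + (d a c + d b c + d a⁻¹ c))
    = (a + a⁻¹ + d a a⁻¹) + (d b a + d b a⁻¹) + (d a a + d a a⁻¹) + (d a c + d a⁻¹ c) + (a + (b + c + d b c)) := by abel
  rw [hinv, hae, haa, hcc] at this
  simp only [zero_add] at this
  rw [← this]
  abel

@[reducible] noncomputable def aux_ringBrace (R : Type) [CommRing R] (r : R) (hr : IsNilpotent r) : SkewBrace R :=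
  { (inferInstance : AddGroup R) with
    mul := fun a b => a + b + r * a * b
    npow := @npowRec R ⟨0⟩ ⟨fun a b => a + b + r * a * b⟩
    one := 0
    inv := fun a => -a * Ring.inverse (1 + r * a)
    mul_assoc := by
      intro a b c
      change (a + b + r * a * b) + c + r * (a + b + r * a * b) * c =
        a + (b + c + r * b * c) + r * a * (b + c + r * b * c)
      ring
    one_mul := by
      intro a
      change 0 + a + r * 0 * a = a
      ring
    mul_one := by
      intro a
      change a + 0 + r * a * 0 = a
      ring
    inv_mul_cancel := by
      intro a
      change -a * Ring.inverse (1 + r * a) + a + r * (-a * Ring.inverse (1 + r * a)) * a = 0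
      have hu : IsUnit (1 + r * a) :=
        ((Commute.all r a).isNilpotent_mul_right hr).isUnit_one_add
      have := Ring.inverse_mul_cancel _ hu
      linear_combination (-a) * this
    skew_left_distrib := by
      intro a b c
      change a + (b + c) + r * a * (b + c) = (a + b + r * a * b) - a + (a + c + r * a * c)
      ring }

theorem aux_cube (n : ℕ) (hn : 0 < n)
    (h : ∀ (A : Type) [Fintype A] [SkewBrace A], Fintype.card A = n →
      (∀ a b c : A, a + b * c = (a + b) * a⁻¹ * (a + c))) (p : ℕ) (hp : p.Prime) :
    n.factorization p ≤ 2 := by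
  by_contra hα
  push Not at hα
  set α := n.factorization p with hαdef
  set m := n / p ^ α with hm
  have hmn : p ^ α * m = n := Nat.ordProj_mul_ordCompl_eq_self n p
  have hpm : ¬ p ∣ m := Nat.not_dvd_ordCompl hp hn.ne'
  haveI : NeZero n := ⟨hn.ne'⟩
  let r : ZMod n := ((p * m : ℕ) : ZMod n)
  have hr : IsNilpotent r := by
    refine ⟨α, ?_⟩
    change ((p * m : ℕ) : ZMod n) ^ α = 0
    rw [← Nat.cast_pow, ZMod.natCast_eq_zero_iff, mul_pow, ← hmn]
    exact mul_dvd_mul_left _ (dvd_pow_self m (by omega))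
  have hu : IsUnit (1 + r) := hr.isUnit_one_add
  have hi := Ring.inverse_mul_cancel _ hu
  have key := @h (ZMod n) _ (aux_ringBrace (ZMod n) r hr) (ZMod.card n)
  set s := Ring.inverse (1 + r) with hs
  -- the inverse of `-s` is `1`
  have hinv : (@Inv.inv (ZMod n) (aux_ringBrace (ZMod n) r hr).toGroup.toInv (-s)) = 1 := by
    change -(-s) * Ring.inverse (1 + r * (-s)) = 1
    have h5 : 1 + r * (-s) = s := by linear_combination -hi
    rw [h5, neg_neg]
    exact Ring.mul_inverse_cancel _ (IsUnit.of_mul_eq_one _ hi)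
  have key2 := key (-s) 1 1
  rw [hinv] at key2
  change -s + (1 + 1 + r * 1 * 1) =
    ((-s + 1) + 1 + r * (-s + 1) * 1) + (-s + 1) + r * ((-s + 1) + 1 + r * (-s + 1) * 1) * (-s + 1)
    at key2
  have hr2 : r ^ 2 = 0 := by
    linear_combination (-1 : ZMod n) * key2 + (1 + r * (1 - s) + r) * hi
  change ((p * m : ℕ) : ZMod n) ^ 2 = 0 at hr2
  rw [← Nat.cast_pow, ZMod.natCast_eq_zero_iff] at hr2
  have h3 : p ^ 3 ∣ p ^ 2 * m ^ 2 := by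
    rw [← mul_pow]
    exact ((pow_dvd_pow p hα).trans (Dvd.intro _ hmn)).trans hr2
  rw [pow_succ] at h3
  exact hpm (hp.dvd_of_dvd_pow (Nat.dvd_of_mul_dvd_mul_left (pow_pos hp.pos 2) h3))

def AuxSD {C F : Type} [AddCommGroup C] [Field F] (_ : C →+ Additive Fˣ) : Type := C × F

section
variable {C F : Type} [AddCommGroup C] [Field F] (χ : C →+ Additive Fˣ)

def auxU (c : C) : F := ((χ c).toMul : Fˣ)

theorem auxU_add (a b : C) : auxU χ (a + b) = auxU χ a * auxU χ b := by
  simp [auxU]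

theorem auxU_zero : auxU χ 0 = 1 := by
  simp [auxU]

theorem auxU_neg (a : C) : auxU χ (-a) * auxU χ a = 1 := by
  rw [← auxU_add, neg_add_cancel, auxU_zero]

@[reducible] def auxSDBrace : SkewBrace (AuxSD χ) :=
  { add := fun a b => ((a.1 + b.1, auxU χ b.1 * a.2 + b.2) : C × F)
    zero := ((0, 0) : C × F)
    neg := fun a => ((-a.1, - (auxU χ (-a.1) * a.2)) : C × F)
    nsmul := @nsmulRec (AuxSD χ) ⟨((0, 0) : C × F)⟩
      ⟨fun a b => ((a.1 + b.1, auxU χ b.1 * a.2 + b.2) : C × F)⟩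
    zsmul := @zsmulRec (AuxSD χ) ⟨((0, 0) : C × F)⟩
      ⟨fun a b => ((a.1 + b.1, auxU χ b.1 * a.2 + b.2) : C × F)⟩
      ⟨fun a => ((-a.1, - (auxU χ (-a.1) * a.2)) : C × F)⟩
      (@nsmulRec (AuxSD χ) ⟨((0, 0) : C × F)⟩
      ⟨fun a b => ((a.1 + b.1, auxU χ b.1 * a.2 + b.2) : C × F)⟩)
    add_assoc := by
      rintro ⟨a, x⟩ ⟨b, y⟩ ⟨c, z⟩
      refine Prod.ext (add_assoc a b c) ?_
      change auxU χ c * (auxU χ b * x + y) + z = auxU χ (b + c) * x + (auxU χ c * y + z)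
      rw [auxU_add]; ring
    zero_add := by
      rintro ⟨a, x⟩
      refine Prod.ext (zero_add a) ?_
      change auxU χ a * 0 + x = x
      ring
    add_zero := by
      rintro ⟨a, x⟩
      refine Prod.ext (add_zero a) ?_
      change auxU χ 0 * x + 0 = x
      rw [auxU_zero]; ring
    neg_add_cancel := by
      rintro ⟨a, x⟩
      refine Prod.ext (neg_add_cancel a) ?_
      change auxU χ a * (- (auxU χ (-a) * x)) + x = 0
      linear_combination (-x) * auxU_neg χ a
    mul := fun a b => ((a.1 + b.1, a.2 + b.2) : C × F)
    one := ((0, 0) : C × F)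
    inv := fun a => ((-a.1, -a.2) : C × F)
    mul_assoc := by
      rintro ⟨a, x⟩ ⟨b, y⟩ ⟨c, z⟩
      exact Prod.ext (add_assoc a b c) (add_assoc x y z)
    one_mul := by
      rintro ⟨a, x⟩
      exact Prod.ext (zero_add a) (zero_add x)
    mul_one := by
      rintro ⟨a, x⟩
      exact Prod.ext (add_zero a) (add_zero x)
    inv_mul_cancel := by
      rintro ⟨a, x⟩
      exact Prod.ext (neg_add_cancel a) (neg_add_cancel x)
    skew_left_distrib := by
      rintro ⟨a, x⟩ ⟨b, y⟩ ⟨c, z⟩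
      refine Prod.ext ?_ ?_
      · change a + (b + c) = ((a + b) + -a) + (a + c)
        abel
      · change x + (auxU χ c * y + z) =
          auxU χ (a + c) * (auxU χ (-a) * (x + y) + -(auxU χ (-a) * x)) + (x + z)
        rw [auxU_add]
        linear_combination (- auxU χ c * y) * auxU_neg χ a }

end

theorem aux_sd (n : ℕ) (hn : 0 < n)
    (h : ∀ (A : Type) [Fintype A] [SkewBrace A], Fintype.card A = n →
      (∀ a b c : A, a + b * c = (a + b) * a⁻¹ * (a + c))) (p q : ℕ)
    (hp : p ∈ n.primeFactors) (hq : q ∈ n.primeFactors) (hpq : p ≠ q) :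
    ¬ p ∣ q ^ n.factorization q - 1 := by
  intro hdvd
  have hpp := Nat.prime_of_mem_primeFactors hp
  have hqp := Nat.prime_of_mem_primeFactors hq
  haveI := Fact.mk hpp
  haveI := Fact.mk hqp
  set β := n.factorization q with hβdef
  have hβ : β ≠ 0 := (hqp.factorization_pos_of_dvd hn.ne' (Nat.dvd_of_mem_primeFactors hq)).ne'
  set k := n / q ^ β with hk
  have hkn : q ^ β * k = n := Nat.ordProj_mul_ordCompl_eq_self n q
  have hpk : p ∣ k := by
    have : p ∣ q ^ β * k := hkn ▸ Nat.dvd_of_mem_primeFactors hp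
    rcases (hpp.dvd_mul).1 this with h | h
    · exact absurd ((Nat.prime_dvd_prime_iff_eq hpp hqp).1 (hpp.dvd_of_dvd_pow h)) hpq
    · exact h
  have hk0 : k ≠ 0 := by rintro h0; rw [h0] at hkn; omega
  haveI : NeZero k := ⟨hk0⟩
  have hF := GaloisField.card q β hβ
  haveI : Finite (GaloisField q β) := Nat.finite_of_card_ne_zero (by rw [hF]; exact (pow_pos hqp.pos _).ne')
  haveI : Fintype (GaloisField q β) := Fintype.ofFinite _
  have hunits : Nat.card (GaloisField q β)ˣ = q ^ β - 1 := by
    rw [Nat.card_units, hF]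
  obtain ⟨u, hu⟩ := exists_prime_orderOf_dvd_card' (G := (GaloisField q β)ˣ) p (hunits ▸ hdvd)
  have huk : u ^ k = 1 := orderOf_dvd_iff_pow_eq_one.1 (hu ▸ hpk)
  let χ : ZMod k →+ Additive (GaloisField q β)ˣ :=
    ZMod.lift k ⟨zmultiplesHom _ (Additive.ofMul u), by
      rw [zmultiplesHom_apply, natCast_zsmul, ← ofMul_pow, huk, ofMul_one]⟩
  have hχ : χ 1 = Additive.ofMul u := by
    have := ZMod.lift_coe k ⟨zmultiplesHom _ (Additive.ofMul u), by
      rw [zmultiplesHom_apply, natCast_zsmul, ← ofMul_pow, huk, ofMul_one]⟩ 1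
    rw [Int.cast_one] at this
    refine this.trans ?_
    simp
  letI : Fintype (AuxSD χ) := inferInstanceAs (Fintype (ZMod k × GaloisField q β))
  have hcard : Fintype.card (AuxSD χ) = n := by
    change Fintype.card (ZMod k × GaloisField q β) = n
    rw [Fintype.card_prod, ZMod.card, ← Nat.card_eq_fintype_card (α := GaloisField q β), hF, mul_comm, hkn]
  have key := @h (AuxSD χ) _ (auxSDBrace χ) hcard ((0, 1) : ZMod k × GaloisField q β)
    ((1, 0) : ZMod k × GaloisField q β) ((1, 0) : ZMod k × GaloisField q β)
  have key2 := congrArg (fun x : ZMod k × GaloisField q β => x.2) key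
  change auxU χ (1 + 1) * 1 + (0 + 0) = (auxU χ 1 * 1 + 0) + -1 + (auxU χ 1 * 1 + 0) at key2
  have hv : auxU χ 1 = (u : GaloisField q β) := by rw [auxU, hχ]; rfl
  rw [auxU_add, hv] at key2
  have h2 : ((u : GaloisField q β) - 1) ^ 2 = 0 := by linear_combination key2
  have h3 : (u : GaloisField q β) = 1 := sub_eq_zero.1 (pow_eq_zero_iff (two_ne_zero) |>.1 h2)
  have h4 : u = 1 := Units.ext h3
  rw [h4, orderOf_one] at hu
  exact hpp.one_lt.ne hu

/-- Every skew brace of order `n` is a bi-skew brace (i.e. `(A,∘,+)` is also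
a skew brace: `a + (b ∘ c) = (a + b) ∘ a⁻¹ ∘ (a + c)`) iff the prime
factorisation of `n` is cube-free and `p ∤ q^{α_q} - 1` for distinct primes
`p, q` dividing `n`. -/
theorem every_skewBrace_is_bi_skew_iff (n : ℕ) (hn : 0 < n) :
    (∀ (A : Type) [Fintype A] [SkewBrace A], Fintype.card A = n →
      (∀ a b c : A, a + b * c = (a + b) * a⁻¹ * (a + c))) ↔
    ((∀ p ∈ n.primeFactors, n.factorization p ≤ 2) ∧
      (∀ p ∈ n.primeFactors, ∀ q ∈ n.primeFactors, p ≠ q →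
        ¬ p ∣ q ^ n.factorization q - 1)) := by
  constructor
  · intro h
    exact ⟨fun p hp => aux_cube n hn h p (Nat.prime_of_mem_primeFactors hp),
      fun p hp q hq hpq => aux_sd n hn h p q hp hq hpq⟩
  · rintro ⟨h1, h2⟩ A _ inst hcard a b c
    rw [← Nat.card_eq_fintype_card] at hcard
    subst hcard
    have hm : ∀ a b : A, a * b = b * a := aux_comm h1 h2
    have ha : ∀ a b : A, a + b = b + a := fun a b =>
      aux_comm (G := Multiplicative A) h1 h2 (Multiplicative.ofAdd a) (Multiplicative.ofAdd b)
    letI : AddCommGroup A := { inst.toAddGroup with add_comm := ha }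
    exact aux_biskew h1 hm (fun a b c => inst.skew_left_distrib a b c) a b c
end

section
/- Let n be a natural number with prime factorisation n = p_1^{α_1} ⋯ p_t^{α_t} (the p_i distinct primes). Then every skew brace of order n has finite multipermutation level if and only if α_i ≤ 2 for every i and p_i does not divide p_j^{α_j} − 1 for all i ≠ j. -/
/-- The socle series of a skew brace `A`, described internally:
`Soc_0(A) = {0}` and `Soc_{m+1}(A)` is the preimage in `A` of
`Soc(A/Soc_m(A)) = Z(A/Soc_m(A), +) ∩ Ker(λ̄)`; concretely, `a ∈ Soc_{m+1}(A)`
iff for all `b`, `(a + b) - (b + a) ∈ Soc_m(A)` (centrality in the additive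
quotient group) and `(-a + a ∘ b) - b ∈ Soc_m(A)` (i.e. `λ̄_ā = id` on the
quotient). -/
def socSeries (A : Type*) [SkewBrace A] : ℕ → Set A
  | 0 => {0}
  | m + 1 => {a : A | ∀ b : A,
      a + b - (b + a) ∈ socSeries A m ∧ (-a + a * b) - b ∈ socSeries A m}

/-- A skew brace has finite multipermutation level if `Soc_m(A) = A` for
some `m`. -/
def HasFiniteMultipermutationLevel (A : Type*) [SkewBrace A] : Prop :=
  ∃ m : ℕ, socSeries A m = Set.univ


theorem aux_aut {P : Type*} [Group P] [Finite P] {p q k : ℕ} (hp : p.Prime) (hq : q.Prime)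
    (hpq : q ≠ p) (hk : k ≤ 2) (hP : Nat.card P = p ^ k) (φ : MulAut P) (hφ : orderOf φ = q) :
    q ∣ p ^ k - 1 := by
  have := Fact.mk hp
  have := Fact.mk hq
  have hpg : IsPGroup q (Subgroup.zpowers φ) := IsPGroup.of_card (n := 1) (by simp [hφ])
  have h1 := hpg.card_modEq_card_fixedPoints P
  let F : Subgroup P := φ.toMonoidHom.eqLocus (MonoidHom.id P)
  have hF : (MulAction.fixedPoints (Subgroup.zpowers φ) P) = (F : Set P) := by
    ext x
    constructor
    · intro h
      exact h ⟨φ, Subgroup.mem_zpowers φ⟩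
    · intro h
      have hx : φ ∈ MulAction.stabilizer (MulAut P) x := h
      rintro ⟨ψ, hψ⟩
      have : ψ ∈ MulAction.stabilizer (MulAut P) x :=
        (Subgroup.zpowers_le.mpr hx) hψ
      exact this
  have hc : Nat.card (MulAction.fixedPoints (Subgroup.zpowers φ) P) = Nat.card F := by
    rw [hF]; rfl
  rw [hc, hP] at h1
  have hd : Nat.card F ∣ p ^ k := hP ▸ F.card_subgroup_dvd_card
  obtain ⟨j, hj, hj'⟩ := (Nat.dvd_prime_pow hp).1 hd
  have hjk : j ≠ k := by
    rintro rfl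
    have : F = ⊤ := Subgroup.eq_top_of_card_eq _ (hj'.trans hP.symm)
    have h2 : φ = 1 := by
      ext x
      have : x ∈ F := this ▸ Subgroup.mem_top x
      exact this
    rw [h2, orderOf_one] at hφ
    exact hq.ne_one hφ.symm
  rw [hj'] at h1
  have h3 : q ∣ p ^ k - p ^ j :=
    (Nat.modEq_iff_dvd' (Nat.pow_le_pow_right hp.pos hj)).1 h1.symm
  have h4 : p ^ k - p ^ j = p ^ j * (p ^ (k - j) - 1) := by
    rw [Nat.mul_sub, mul_one, ← pow_add, Nat.add_sub_cancel' hj]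
  rw [h4] at h3
  have h5 : Nat.Coprime q (p ^ j) := Nat.Coprime.pow_right _ ((Nat.coprime_primes hq hp).2 hpq)
  have h6 := h5.dvd_of_dvd_mul_left h3
  refine h6.trans (Nat.pow_sub_one_dvd_pow_sub_one _ ?_)
  have : j < k := lt_of_le_of_ne hj hjk
  interval_cases k <;> interval_cases j <;> simp

theorem aux_comm_sylow {P : Type*} [Group P] [Finite P] {p k : ℕ} (hp : p.Prime)
    (hk : k ≤ 2) (hP : Nat.card P = p ^ k) : IsMulCommutative P := by
  have := Fact.mk hp
  interval_cases k
  · have : Subsingleton P := (Nat.card_eq_one_iff_unique.mp (by simpa using hP)).1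
    exact ⟨⟨fun a b => Subsingleton.elim _ _⟩⟩
  · have := isCyclic_of_prime_card (α := P) (p := p) (by simpa using hP)
    exact ⟨⟨fun a b => by
      let := IsCyclic.commGroup (α := P)
      exact mul_comm a b⟩⟩
  · exact IsPGroup.isMulCommutative_of_card_eq_prime_sq hP

theorem aux_group_comm {G : Type*} [Group G] [Finite G] (n : ℕ) (hn : Nat.card G = n)
    (h1 : ∀ p ∈ n.primeFactors, n.factorization p ≤ 2)
    (h2 : ∀ p ∈ n.primeFactors, ∀ q ∈ n.primeFactors, p ≠ q →
        ¬ p ∣ q ^ n.factorization q - 1) (a b : G) : a * b = b * a := by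
  have hn0 : n ≠ 0 := hn ▸ Nat.card_pos.ne'
  have key : ∀ p ∈ n.primeFactors, ∃ K : Subgroup G, ¬ p ∣ Nat.card K ∧
      a * b * (b * a)⁻¹ ∈ K := by
    intro p hpn
    have hp := Nat.prime_of_mem_primeFactors hpn
    have := Fact.mk hp
    let P : Sylow p G := default
    have hcard : Nat.card P = p ^ n.factorization p := by
      rw [P.card_eq_multiplicity, hn]
    have hcomm : IsMulCommutative P := aux_comm_sylow hp (h1 p hpn) hcard
    have hNC : Subgroup.normalizer (P : Set G) ≤ Subgroup.centralizer (P : Set G) := by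
      rw [← Subgroup.relIndex_eq_one]
      by_contra hr
      obtain ⟨q, hq, hqr⟩ := Nat.exists_prime_and_dvd hr
      have := Fact.mk hq
      have hq1 : q ∣ P.index := by
        refine hqr.trans ?_
        refine (Subgroup.relIndex_dvd_of_le_left _ (P : Subgroup G).le_centralizer).trans ?_
        exact Dvd.intro _ (Subgroup.relIndex_mul_index Subgroup.le_normalizer)
      have hqp : q ≠ p := by
        rintro rfl
        exact P.not_dvd_index hq1
      have hqn : q ∈ n.primeFactors :=
        Nat.mem_primeFactors.2 ⟨hq, hn ▸ hq1.trans (Subgroup.index_dvd_card _), hn0⟩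
      have hqr' : q ∣ Nat.card (P : Subgroup G).normalizerMonoidHom.range := by
        rw [← Subgroup.index_ker, Subgroup.normalizerMonoidHom_ker]
        exact hqr
      obtain ⟨⟨φ, hφ⟩, hφ'⟩ := exists_prime_orderOf_dvd_card' q hqr'
      rw [← Subgroup.orderOf_coe] at hφ'
      exact h2 q hqn p hpn hqp (aux_aut hp hq hqp (h1 p hpn) hcard φ hφ')
    refine ⟨(MonoidHom.transferSylow P hNC).ker,
      MonoidHom.not_dvd_card_ker_transferSylow P hNC, ?_⟩
    rw [MonoidHom.mem_ker, map_mul, map_inv, map_mul, map_mul,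
      hcomm.is_comm.comm (MonoidHom.transferSylow P hNC a), mul_inv_cancel]
  have h3 : orderOf (a * b * (b * a)⁻¹) = 1 := by
    by_contra hne
    obtain ⟨p, hp, hpd⟩ := Nat.exists_prime_and_dvd hne
    obtain ⟨K, hK, hmem⟩ := key p
      (Nat.mem_primeFactors.2 ⟨hp, hn ▸ hpd.trans (orderOf_dvd_natCard _), hn0⟩)
    exact hK (hpd.trans (Subgroup.orderOf_dvd_natCard K hmem))
  rw [orderOf_eq_one_iff] at h3
  exact mul_inv_eq_one.1 h3

section annSeriesSection
variable {A : Type*} [AddCommGroup A]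

def annSeries (m : A →+ A →+ A) : ℕ → AddSubgroup A
  | 0 => ⊥
  | k + 1 =>
    { carrier := {a | ∀ b, m a b ∈ annSeries m k}
      zero_mem' := fun b => by simp
      add_mem' := fun {x y} hx hy b => by
        rw [map_add, AddMonoidHom.add_apply]
        exact add_mem (hx b) (hy b)
      neg_mem' := fun {x} hx b => by
        rw [map_neg, AddMonoidHom.neg_apply]
        exact neg_mem (hx b) }

theorem mem_annSeries_succ (m : A →+ A →+ A) (k : ℕ) (a : A) :
    a ∈ annSeries m (k + 1) ↔ ∀ b, m a b ∈ annSeries m k := Iff.rfl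

theorem annSeries_le_succ (m : A →+ A →+ A) (k : ℕ) :
    annSeries m k ≤ annSeries m (k + 1) := by
  induction k with
  | zero =>
    intro a ha b
    have : a = 0 := ha
    simp [this]
  | succ k ih =>
    intro a ha b
    exact ih (ha b)

theorem annSeries_eq_top [Finite A] (m : A →+ A →+ A)
    (assoc : ∀ a b c, m (m a b) c = m a (m b c)) (hq : ∀ c, ∃ d, c + d + m c d = 0) :
    ∃ k, annSeries m k = ⊤ := by
  obtain ⟨k, hk⟩ := WellFoundedGT.monotone_chain_condition
    (⟨annSeries m, monotone_nat_of_le_succ (annSeries_le_succ m)⟩ : ℕ →o AddSubgroup A)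
  have hk : annSeries m k = annSeries m (k + 1) := hk (k + 1) (Nat.le_succ k)
  refine ⟨k, ?_⟩
  by_contra hne
  set S := annSeries m k with hS
  have hne' : ∃ x, x ∉ S := by
    by_contra! h
    exact hne (eq_top_iff.2 fun x _ => h x)
  obtain ⟨x, hx, hmin⟩ := Set.exists_min_image {x | x ∉ S}
    (fun x => Nat.card ((m x).range ⊔ S : AddSubgroup A)) (Set.toFinite _) hne'
  have hx' : x ∉ annSeries m (k + 1) := hk ▸ hx
  rw [mem_annSeries_succ] at hx'
  push Not at hx'
  obtain ⟨b, hb⟩ := hx'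
  have hle : ((m (m x b)).range ⊔ S : AddSubgroup A) ≤ (m x).range ⊔ S := by
    refine sup_le_sup_right ?_ S
    rintro _ ⟨c, rfl⟩
    exact ⟨m b c, (assoc x b c).symm⟩
  have heq := AddSubgroup.eq_of_le_of_card_ge hle (hmin _ hb)
  have hy : m x b ∈ ((m (m x b)).range ⊔ S : AddSubgroup A) := by
    rw [heq]
    exact AddSubgroup.mem_sup_left ⟨b, rfl⟩
  obtain ⟨_, ⟨c, rfl⟩, s, hs, hcs⟩ := AddSubgroup.mem_sup.1 hy
  generalize m x b = y at *
  obtain ⟨d, hd⟩ := hq (-c)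
  have hsd : m s d ∈ S := annSeries_le_succ m k hs d
  have h1 : s = y - m y c := eq_sub_of_add_eq' hcs
  have h2 : y = s + m s d := by
    have h3 : m y (-c + d + m (-c) d) = 0 := by rw [hd, map_zero]
    rw [map_add, map_add, map_neg, ← assoc, map_neg, map_neg, AddMonoidHom.neg_apply] at h3
    rw [h1, map_sub, AddMonoidHom.sub_apply]
    rw [← sub_eq_zero, ← neg_eq_zero, ← h3]
    abel
  exact hb (h2 ▸ add_mem hs hsd)

end annSeriesSection

theorem SkewBrace.mul_zero' {A : Type*} [SkewBrace A] (a : A) : a * 0 = a := by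
  have h := SkewBrace.skew_left_distrib a 0 0
  rw [add_zero] at h
  have h2 : a * 0 + 0 = a * 0 + (-a + a * 0) := by
    rw [← add_assoc, ← sub_eq_add_neg, ← h, add_zero]
  have h3 := add_left_cancel h2
  exact (neg_add_eq_zero.1 h3.symm).symm

theorem SkewBrace.zero_eq_one {A : Type*} [SkewBrace A] : (0 : A) = 1 :=
  mul_left_cancel (a := (1 : A)) (by rw [SkewBrace.mul_zero', mul_one])

theorem fml_of_comm {A : Type*} [Finite A] [SkewBrace A]
    (hadd : ∀ a b : A, a + b = b + a) (hmul : ∀ a b : A, a * b = b * a) :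
    HasFiniteMultipermutationLevel A := by
  let I : AddCommGroup A := { (inferInstance : AddGroup A) with add_comm := hadd }
  have hd : ∀ a b c : A, -a + a * (b + c) - (b + c) = (-a + a * b - b) + (-a + a * c - c) := by
    intro a b c
    rw [SkewBrace.skew_left_distrib]
    have : ∀ u v : A, -a + (u - a + v) - (b + c) = (-a + u - b) + (-a + v - c) := by
      intro u v; abel
    exact this _ _
  let m : A →+ A →+ A := AddMonoidHom.mk' (fun a => AddMonoidHom.mk'
    (fun b => -a + a * b - b) (hd a)) (by
      intro a b
      ext c
      have h := hd c a b
      rw [hmul c, hmul c, hmul c] at h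
      have e : ∀ u v : A, -u + v - c = -c + v - u := by intro u v; abel
      change -(a + b) + (a + b) * c - c = (-a + a * c - c) + (-b + b * c - c)
      rw [e, e, e]
      exact h)
  have hm : ∀ a b, m a b = -a + a * b - b := fun a b => rfl
  have hm' : ∀ a b, a * b = a + b + m a b := fun a b => by rw [hm]; abel
  obtain ⟨k, hk⟩ := annSeries_eq_top m (by
    intro a b c
    have h := mul_assoc a b c
    rw [hm' (a * b) c, hm' a (b * c), hm' a b, hm' b c] at h
    simp only [map_add, AddMonoidHom.add_apply] at h
    have e : ∀ u v : A, a + b + m a b + c + (m a c + m b c + u) =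
      a + (b + c + m b c) + (m a b + m a c + v) → u = v := by
      intro u v h
      have e1 : a + b + m a b + c + (m a c + m b c + u) =
        a + b + m a b + c + m a c + m b c + u := by abel
      have e2 : a + (b + c + m b c) + (m a b + m a c + v) =
        a + b + m a b + c + m a c + m b c + v := by abel
      rw [e1, e2] at h
      exact add_left_cancel h
    exact e _ _ h) (fun c => ⟨c⁻¹, by
      rw [← hm', mul_inv_cancel, SkewBrace.zero_eq_one]⟩)
  have hs : ∀ j, socSeries A j = (annSeries m j : Set A) := by
    intro j
    induction j with
    | zero => rfl
    | succ j ih =>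
      ext a
      rw [socSeries, ih]
      constructor
      · intro h b
        exact (h b).2
      · intro h b
        refine ⟨?_, h b⟩
        rw [hadd a b, sub_self]
        exact (annSeries m j).zero_mem
  exact ⟨k, by rw [hs, hk]; rfl⟩

theorem not_fml_of_set {A : Type*} [SkewBrace A] (X : Set A) (hne : X.Nonempty)
    (h0 : (0 : A) ∉ X)
    (h : ∀ a ∈ X, ∃ b, a + b - (b + a) ∈ X ∨ (-a + a * b) - b ∈ X) :
    ¬ HasFiniteMultipermutationLevel A := by
  rintro ⟨m, hm⟩
  have key : ∀ k, ∀ a ∈ X, a ∉ socSeries A k := by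
    intro k
    induction k with
    | zero =>
      intro a ha h
      have : a = 0 := h
      exact h0 (this ▸ ha)
    | succ k ih =>
      intro a ha hs
      obtain ⟨b, hb | hb⟩ := h a ha
      · exact ih _ hb (hs b).1
      · exact ih _ hb (hs b).2
  obtain ⟨x, hx⟩ := hne
  exact key m x hx (hm ▸ Set.mem_univ x)

instance SkewBrace.instProd {A B : Type*} [SkewBrace A] [SkewBrace B] : SkewBrace (A × B) where
  skew_left_distrib a b c := Prod.ext (SkewBrace.skew_left_distrib _ _ _)
    (SkewBrace.skew_left_distrib _ _ _)

def TrivBrace (G : Type*) := G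

instance {G : Type*} [Group G] : AddGroup (TrivBrace G) := inferInstanceAs (AddGroup (Additive G))
instance {G : Type*} [Group G] : Group (TrivBrace G) := inferInstanceAs (Group G)

instance {G : Type*} [Group G] : SkewBrace (TrivBrace G) where
  skew_left_distrib a b c := by
    have h : ∀ a b c : G, a * (b * c) = (a * b) / a * (a * c) := by
      intro a b c
      simp [div_eq_mul_inv, mul_assoc]
    exact h a b c

theorem not_fml_prod {A B : Type*} [SkewBrace A] [SkewBrace B] (X : Set A) (hne : X.Nonempty)
    (h0 : (0 : A) ∉ X)
    (h : ∀ a ∈ X, ∃ b, a + b - (b + a) ∈ X ∨ (-a + a * b) - b ∈ X) :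
    ¬ HasFiniteMultipermutationLevel (A × B) := by
  refine not_fml_of_set {x : A × B | x.1 ∈ X} ?_ h0 ?_
  · obtain ⟨x, hx⟩ := hne
    exact ⟨(x, 0), hx⟩
  · rintro ⟨a, c⟩ ha
    obtain ⟨b, hb⟩ := h a ha
    exact ⟨(b, 0), hb⟩

/-- Reduction to a divisor. -/
theorem exists_not_fml {n : ℕ} (hn : 0 < n) (A : Type) [Finite A] [SkewBrace A]
    (hA : Nat.card A ∣ n) (X : Set A) (hne : X.Nonempty) (h0 : (0 : A) ∉ X)
    (h : ∀ a ∈ X, ∃ b, a + b - (b + a) ∈ X ∨ (-a + a * b) - b ∈ X) :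
    ¬ ∀ (A : Type) [Fintype A] [SkewBrace A], Fintype.card A = n →
      HasFiniteMultipermutationLevel A := by
  intro hall
  obtain ⟨k, rfl⟩ := hA
  have hk : k ≠ 0 := by rintro rfl; simp at hn
  have : NeZero k := ⟨hk⟩
  have hB : Nat.card (TrivBrace (Multiplicative (ZMod k))) = k := Nat.card_zmod k
  have : Finite (TrivBrace (Multiplicative (ZMod k))) :=
    Nat.finite_of_card_ne_zero (by rw [hB]; exact hk)
  have : Fintype (A × TrivBrace (Multiplicative (ZMod k))) := Fintype.ofFinite _
  exact not_fml_prod X hne h0 h (hall (A × TrivBrace (Multiplicative (ZMod k))) (by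
    rw [← Nat.card_eq_fintype_card, Nat.card_prod, hB]))

/-- The skew brace of order `|R|^3` with trivial socle. -/
@[ext] structure CubeBrace (R : Type*) where
  x : R
  y : R
  z : R

namespace CubeBrace
variable {R : Type*} [CommRing R]

instance : Add (CubeBrace R) :=
  ⟨fun a b => ⟨a.x + b.x, a.y + b.y, a.z + b.z + a.x * b.y - a.y * b.x⟩⟩
instance : Zero (CubeBrace R) := ⟨⟨0, 0, 0⟩⟩
instance : Neg (CubeBrace R) := ⟨fun a => ⟨-a.x, -a.y, -a.z⟩⟩

instance : AddGroup (CubeBrace R) :=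
  { nsmul := nsmulRec
    zsmul := zsmulRec
    add_assoc := fun a b c => by
      apply CubeBrace.ext
      · change a.x + b.x + c.x = a.x + (b.x + c.x); ring
      · change a.y + b.y + c.y = a.y + (b.y + c.y); ring
      · change a.z + b.z + a.x * b.y - a.y * b.x + c.z + (a.x + b.x) * c.y - (a.y + b.y) * c.x =
          a.z + (b.z + c.z + b.x * c.y - b.y * c.x) + a.x * (b.y + c.y) - a.y * (b.x + c.x)
        ring
    zero_add := fun a => by
      apply CubeBrace.ext
      · change 0 + a.x = a.x; ring
      · change 0 + a.y = a.y; ring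
      · change 0 + a.z + 0 * a.y - 0 * a.x = a.z; ring
    add_zero := fun a => by
      apply CubeBrace.ext
      · change a.x + 0 = a.x; ring
      · change a.y + 0 = a.y; ring
      · change a.z + 0 + a.x * 0 - a.y * 0 = a.z; ring
    neg_add_cancel := fun a => by
      apply CubeBrace.ext
      · change -a.x + a.x = 0; ring
      · change -a.y + a.y = 0; ring
      · change -a.z + a.z + -a.x * a.y - -a.y * a.x = 0; ring }

instance : Group (CubeBrace R) :=
  { mul := fun a b => ⟨a.x + b.x + a.z * b.y, a.y + b.y, a.z + b.z⟩
    one := ⟨0, 0, 0⟩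
    inv := fun a => ⟨-a.x + a.z * a.y, -a.y, -a.z⟩
    mul_assoc := fun a b c => by
      apply CubeBrace.ext
      · change a.x + b.x + a.z * b.y + c.x + (a.z + b.z) * c.y =
          a.x + (b.x + c.x + b.z * c.y) + a.z * (b.y + c.y)
        ring
      · change a.y + b.y + c.y = a.y + (b.y + c.y); ring
      · change a.z + b.z + c.z = a.z + (b.z + c.z); ring
    one_mul := fun a => by
      apply CubeBrace.ext
      · change 0 + a.x + 0 * a.y = a.x; ring
      · change 0 + a.y = a.y; ring
      · change 0 + a.z = a.z; ring
    mul_one := fun a => by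
      apply CubeBrace.ext
      · change a.x + 0 + a.z * 0 = a.x; ring
      · change a.y + 0 = a.y; ring
      · change a.z + 0 = a.z; ring
    inv_mul_cancel := fun a => by
      apply CubeBrace.ext
      · change -a.x + a.z * a.y + a.x + -a.z * a.y = 0; ring
      · change -a.y + a.y = 0; ring
      · change -a.z + a.z = 0; ring }

theorem add_def (a b : CubeBrace R) :
    a + b = ⟨a.x + b.x, a.y + b.y, a.z + b.z + a.x * b.y - a.y * b.x⟩ := rfl
theorem mul_def (a b : CubeBrace R) :
    a * b = ⟨a.x + b.x + a.z * b.y, a.y + b.y, a.z + b.z⟩ := rfl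
theorem neg_def (a : CubeBrace R) : -a = ⟨-a.x, -a.y, -a.z⟩ := rfl
theorem zero_def : (0 : CubeBrace R) = ⟨0, 0, 0⟩ := rfl

instance : SkewBrace (CubeBrace R) where
  skew_left_distrib a b c := by
    simp only [sub_eq_add_neg, add_def, mul_def, neg_def]
    apply CubeBrace.ext
    · dsimp only; ring
    · dsimp only; ring
    · dsimp only; ring

def equivProd : CubeBrace R ≃ R × R × R where
  toFun a := (a.x, a.y, a.z)
  invFun a := ⟨a.1, a.2.1, a.2.2⟩

theorem exists_ne [Nontrivial R] (a : CubeBrace R) (ha : a ≠ 0) :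
    ∃ b, (-a + a * b) - b ≠ 0 := by
  by_cases hz : a.z = 0
  · by_cases hx : a.x = 0
    · have hy : a.y ≠ 0 := fun hy => ha (CubeBrace.ext hx hy hz)
      refine ⟨⟨1, 0, 0⟩, fun h => hy ?_⟩
      have := congrArg CubeBrace.z h
      simpa [sub_eq_add_neg, add_def, mul_def, neg_def, zero_def, hx, hz] using this
    · refine ⟨⟨0, 1, 0⟩, fun h => hx ?_⟩
      have := congrArg CubeBrace.z h
      simp [sub_eq_add_neg, add_def, mul_def, neg_def, zero_def, hz] at this
      linear_combination -this
  · refine ⟨⟨0, 1, 0⟩, fun h => hz ?_⟩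
    have := congrArg CubeBrace.x h
    simpa [sub_eq_add_neg, add_def, mul_def, neg_def, zero_def, hz] using this

end CubeBrace

theorem case_cube {n : ℕ} (hn : 0 < n) (p : ℕ) (hp : p.Prime) (h : p ^ 3 ∣ n) :
    ¬ ∀ (A : Type) [Fintype A] [SkewBrace A], Fintype.card A = n →
      HasFiniteMultipermutationLevel A := by
  have := Fact.mk hp
  have : Finite (CubeBrace (ZMod p)) := Finite.of_equiv _ CubeBrace.equivProd.symm
  refine exists_not_fml hn (CubeBrace (ZMod p)) ?_ {a | a ≠ 0} ⟨⟨1, 0, 0⟩, fun h => ?_⟩ ?_ ?_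
  · rw [Nat.card_congr CubeBrace.equivProd]
    simp only [Nat.card_prod, Nat.card_zmod]
    convert h using 1
    ring
  · have := congrArg CubeBrace.x h
    exact one_ne_zero this
  · simp
  · intro a ha
    obtain ⟨b, hb⟩ := CubeBrace.exists_ne a ha
    exact ⟨b, Or.inr hb⟩

/-- The affine group `F ⋊ U`. -/
@[ext] structure AffGrp (F : Type*) [Field F] (U : Subgroup Fˣ) where
  x : F
  u : U

namespace AffGrp
variable {F : Type*} [Field F] {U : Subgroup Fˣ}

instance : Group (AffGrp F U) :=
  { mul := fun a b => ⟨a.x + (a.u : Fˣ) * b.x, a.u * b.u⟩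
    one := ⟨0, 1⟩
    inv := fun a => ⟨-(((a.u⁻¹ : U) : Fˣ) * a.x), a.u⁻¹⟩
    mul_assoc := fun a b c => by
      apply AffGrp.ext
      · change a.x + (a.u : Fˣ) * b.x + ((a.u * b.u : U) : Fˣ) * c.x =
          a.x + (a.u : Fˣ) * (b.x + (b.u : Fˣ) * c.x)
        push_cast
        ring
      · exact mul_assoc _ _ _
    one_mul := fun a => by
      apply AffGrp.ext
      · change 0 + ((1 : U) : Fˣ) * a.x = a.x
        simp
      · exact one_mul _
    mul_one := fun a => by
      apply AffGrp.ext
      · change a.x + (a.u : Fˣ) * 0 = a.x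
        simp
      · exact mul_one _
    inv_mul_cancel := fun a => by
      apply AffGrp.ext
      · change -(((a.u⁻¹ : U) : Fˣ) * a.x) + ((a.u⁻¹ : U) : Fˣ) * a.x = 0
        ring
      · exact inv_mul_cancel _ }

theorem mul_def (a b : AffGrp F U) : a * b = ⟨a.x + (a.u : Fˣ) * b.x, a.u * b.u⟩ := rfl

def equivProd : AffGrp F U ≃ F × U where
  toFun a := (a.x, a.u)
  invFun a := ⟨a.1, a.2⟩

end AffGrp

theorem case_aff {n : ℕ} (hn : 0 < n) (p q k : ℕ) (hp : p.Prime) (hq : q.Prime) (hk : k ≠ 0)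
    (h : p * q ^ k ∣ n) (hd : p ∣ q ^ k - 1) :
    ¬ ∀ (A : Type) [Fintype A] [SkewBrace A], Fintype.card A = n →
      HasFiniteMultipermutationLevel A := by
  have := Fact.mk hp
  have := Fact.mk hq
  let F := GaloisField q k
  have : Finite F := inferInstanceAs (Finite (GaloisField q k))
  have hF : Nat.card F = q ^ k := GaloisField.card q k hk
  obtain ⟨u, hu⟩ := exists_prime_orderOf_dvd_card' (G := Fˣ) p (by
    rw [Nat.card_units, hF]; exact hd)
  let U : Subgroup Fˣ := Subgroup.zpowers u
  have hU : Nat.card U = p := by rw [Nat.card_zpowers, hu]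
  have hu1 : u ≠ 1 := by
    rintro rfl
    rw [orderOf_one] at hu
    exact hp.ne_one hu.symm
  have hcard : Nat.card (AffGrp F U) = q ^ k * p := by
    rw [Nat.card_congr AffGrp.equivProd, Nat.card_prod, hF, hU]
  have : Finite (AffGrp F U) := Finite.of_equiv _ AffGrp.equivProd.symm
  have : Finite (TrivBrace (AffGrp F U)) := this
  refine exists_not_fml hn (TrivBrace (AffGrp F U)) ?_
    {a : AffGrp F U | a.x ≠ 0 ∧ a.u = 1} ⟨(⟨1, 1⟩ : AffGrp F U), one_ne_zero, rfl⟩ ?_ ?_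
  · change Nat.card (AffGrp F U) ∣ n
    rw [hcard, mul_comm]
    exact h
  · intro h
    exact h.1 rfl
  · rintro ⟨x, w⟩ ⟨hx, hw⟩
    change x ≠ 0 at hx
    change w = 1 at hw
    subst hw
    let b : AffGrp F U := ⟨0, ⟨u, Subgroup.mem_zpowers u⟩⟩
    refine ⟨b, Or.inl ?_⟩
    let a : AffGrp F U := ⟨x, 1⟩
    change (a * b) / (b * a) ∈ {a : AffGrp F U | a.x ≠ 0 ∧ a.u = 1}
    have e : (a * b) / (b * a) = ⟨(1 - (u : F)) * x, 1⟩ := by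
      rw [div_eq_iff_eq_mul]
      apply AffGrp.ext
      · simp [AffGrp.mul_def, a, b]
        ring
      · simp [AffGrp.mul_def, a, b]
    rw [e]
    refine ⟨mul_ne_zero ?_ hx, rfl⟩
    rw [sub_ne_zero]
    intro h
    exact hu1 (Units.ext h.symm)

/-- Every skew brace of order `n` has finite multipermutation level iff the
prime factorisation of `n` is cube-free and `p ∤ q^{α_q} - 1` for distinct
primes `p, q` dividing `n`. -/
theorem every_skewBrace_has_fml_iff (n : ℕ) (hn : 0 < n) :
    (∀ (A : Type) [Fintype A] [SkewBrace A], Fintype.card A = n →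
      HasFiniteMultipermutationLevel A) ↔
    ((∀ p ∈ n.primeFactors, n.factorization p ≤ 2) ∧
      (∀ p ∈ n.primeFactors, ∀ q ∈ n.primeFactors, p ≠ q →
        ¬ p ∣ q ^ n.factorization q - 1)) := by
  constructor
  · intro hall
    constructor
    · intro p hp
      by_contra hlt
      refine case_cube hn p (Nat.prime_of_mem_primeFactors hp) ?_ hall
      exact (pow_dvd_pow p (by omega)).trans (Nat.ordProj_dvd n p)
    · intro p hp q hq hpq hd
      have hp' := Nat.prime_of_mem_primeFactors hp
      have hq' := Nat.prime_of_mem_primeFactors hq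
      refine case_aff hn p q (n.factorization q) hp' hq' ?_ ?_ hd hall
      · exact (hq'.factorization_pos_of_dvd hn.ne' (Nat.dvd_of_mem_primeFactors hq)).ne'
      · exact Nat.Coprime.mul_dvd_of_dvd_of_dvd
          (Nat.Coprime.pow_right _ ((Nat.coprime_primes hp' hq').2 hpq))
          (Nat.dvd_of_mem_primeFactors hp) (Nat.ordProj_dvd n q)
  · rintro ⟨h1, h2⟩ A _ _ hA
    refine fml_of_comm ?_ ?_
    · exact fun a b => aux_group_comm (G := Multiplicative A) n
        (by rw [← hA, ← Nat.card_eq_fintype_card]; rfl) h1 h2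
        (Multiplicative.ofAdd a) (Multiplicative.ofAdd b)
    · exact aux_group_comm n (by rw [← hA, Nat.card_eq_fintype_card]) h1 h2
end
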